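/- arXiv:2510.22385 — 3 statements merged into one kernel-verified Lean document; each statement's English description precedes it below -/
import Mathlib

section
/- For all n ≥ 0, the tree inversion enumerator equals the parking function cosum enumerator: Σ_{T ∈ Tree(n+1)} q^{inv(T)} = Σ_{π ∈ PF(n)} q^{cosum(π)} as polynomials in q. -/
open Finset Polynomial

/-- `j` lies on the unique path from `i` to the root `0` in the tree `T`. -/
def OnPath {n : ℕ} (T : SimpleGraph (Fin (n+1))) (i j : Fin (n+1)) : Prop :=
  ∀ p : T.Walk i 0, p.IsPath → j ∈ p.support

/-- The number of inversions of a tree on `{0,...,n}` rooted at `0`: pairs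
`(i,j)` with `1 ≤ i < j ≤ n` such that `j` is on the path from `i` to `0`. -/
noncomputable def treeInv {n : ℕ} (T : SimpleGraph (Fin (n+1))) : ℕ :=
  Nat.card {p : Fin (n+1) × Fin (n+1) //
    0 < p.1.val ∧ p.1 < p.2 ∧ OnPath T p.1 p.2}

/-- `IsPF n π` : `π` is a parking function of length `n`, i.e. a sequence of
positive integers whose weakly increasing rearrangement `b₁ ≤ ⋯ ≤ bₙ`
satisfies `b_j ≤ j` for all `1 ≤ j ≤ n`. -/
def IsPF (n : ℕ) (π : Fin n → ℕ) : Prop :=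
  (∀ i, 1 ≤ π i) ∧ ∃ σ : Equiv.Perm (Fin n),
    (Monotone fun j => π (σ j)) ∧ ∀ j : Fin n, π (σ j) ≤ j.val + 1

/-- The cosum of a parking function: `C(n+1,2) - Σ_i π_i`. -/
noncomputable def cosum (n : ℕ) (π : Fin n → ℕ) : ℕ :=
  Nat.choose (n+1) 2 - ∑ i, π i

/-!
Both enumerators satisfy Kreweras's recursion
`K (n + 1) = ∑ k, C(n, k) (1 + q + ⋯ + q ^ k) K k K (n - k)`.

A tree on `{0, ..., n}` rooted at `0` is a rooted forest on the `n` other vertices, and no inversion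
involves `0`. In a rooted forest on `n + 1` vertices fix a vertex `v` and let `S` be the vertex set
of the tree containing it, with `#S = k + 1`. The root of this tree can be any vertex of `S`, and it
forms an inversion with each smaller vertex of `S`, so that the choice of the root contributes
`1 + q + ⋯ + q ^ k`. What remains is a rooted forest on the other `k` vertices of `S` and a rooted
forest on the complement of `S`.

In a parking function on `n + 1` cars let the car `v` park last. The other cars leave one spot free;
let `L` be the set of the cars parked before that spot, with `#L = k`. The preferences of the cars
of `L` form a parking function, so do those of the cars parked beyond the free spot after a shift
by `k + 1`, and `v` prefers any of the first `k + 1` spots, which contributes `1 + q + ⋯ + q ^ k` to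
the cosum enumerator.
-/

section Kreweras

variable {A α : Type*} [CommSemiring A]

/-- The Kreweras polynomials `Kₙ(q)`, the common value of the two enumerators. They are evaluated
at an element `q` of an arbitrary commutative semiring. -/
def kreweras (q : A) : ℕ → A
  | 0 => 1
  | n + 1 => ∑ k : Fin (n + 1),
      n.choose k • ((∑ r ∈ range (k + 1), q ^ r) * kreweras q k * kreweras q (n - k))

lemma kreweras_card_eq_sum_powerset_erase [DecidableEq α] (q : A) {V : Finset α} {v : α}
    (hv : v ∈ V) :
    kreweras q #V = ∑ L ∈ (V.erase v).powerset,
      (∑ r ∈ range (#L + 1), q ^ r) * kreweras q #L * kreweras q #(V.erase v \ L) := by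
  rw [← card_erase_add_one hv, kreweras, ← sum_range fun k => (#(V.erase v)).choose k •
    ((∑ r ∈ range (k + 1), q ^ r) * kreweras q k * kreweras q (#(V.erase v) - k)),
    ← sum_powerset_apply_card fun k =>
      (∑ r ∈ range (k + 1), q ^ r) * kreweras q k * kreweras q (#(V.erase v) - k)]
  exact sum_congr rfl fun L hL => by rw [card_sdiff_of_subset (mem_powerset.1 hL)]

lemma sum_pow_card_filter_lt [LinearOrder α] (q : A) (S : Finset α) :
    ∑ i ∈ S, q ^ #{x ∈ S | x < i} = ∑ r ∈ range #S, q ^ r := by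
  induction S using Finset.induction_on_max with
  | empty => simp
  | insert m S hm ih =>
    have hmS : m ∉ S := fun h => lt_irrefl _ (hm m h)
    have rank_max : {x ∈ insert m S | x < m} = S := by grind
    have rank_of_mem : ∀ i ∈ S, {x ∈ insert m S | x < i} = {x ∈ S | x < i} := by grind
    rw [sum_insert hmS, card_insert_of_notMem hmS, sum_range_succ, ← ih, add_comm, rank_max,
      sum_congr rfl fun i hi => by rw [rank_of_mem i hi]]

end Kreweras

lemma sum_eq_sum_sum_filter_of_existsUnique {ι κ M : Type*} [AddCommMonoid M] {s : Finset ι}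
    {t : Finset κ} {p : ι → κ → Prop} [∀ i k, Decidable (p i k)]
    (h : ∀ i ∈ s, ∃! k, k ∈ t ∧ p i k) (f : ι → M) :
    ∑ i ∈ s, f i = ∑ k ∈ t, ∑ i ∈ s with p i k, f i := by
  simp_rw [sum_filter]
  rw [sum_comm]
  refine sum_congr rfl fun i hi => ?_
  obtain ⟨k, ⟨hk, hik⟩, huniq⟩ := h i hi
  rw [sum_eq_single_of_mem k hk fun k' hk' hne => if_neg fun hik' => hne (huniq k' ⟨hk', hik'⟩),
    if_pos hik]

section Forest

variable {α : Type*}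

/-- A rooted forest with vertex set `V`, encoded by its strict ancestor relation: `(x, y) ∈ R` says
that `y` is a proper ancestor of `x`. These relations are the strict partial orders in which the
elements above any given one form a chain. -/
structure IsForestOrder (V : Finset α) (R : Finset (α × α)) : Prop where
  mem_of_mem : ∀ x y, (x, y) ∈ R → x ∈ V ∧ y ∈ V
  irrefl : ∀ x, (x, x) ∉ R
  trans : ∀ x y z, (x, y) ∈ R → (y, z) ∈ R → (x, z) ∈ R
  chain : ∀ x y z, (x, y) ∈ R → (x, z) ∈ R → y = z ∨ (y, z) ∈ R ∨ (z, y) ∈ R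

/-- `S` is the vertex set of a tree of the forest `R`, and `i` is the root of that tree. -/
structure IsComponent (R : Finset (α × α)) (S : Finset α) (i : α) : Prop where
  root_mem : i ∈ S
  below_root : ∀ x ∈ S, x ≠ i → (x, i) ∈ R
  root_top : ∀ y, (i, y) ∉ R
  closed : ∀ x y, (x, y) ∈ R → (x ∈ S ↔ y ∈ S)

open Classical in
/-- The set of rooted forests with vertex set `V`. -/
noncomputable def forestOrders (V : Finset α) : Finset (Finset (α × α)) :=
  {R ∈ (V ×ˢ V).powerset | IsForestOrder V R}

lemma mem_forestOrders {V : Finset α} {R : Finset (α × α)} :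
    R ∈ forestOrders V ↔ IsForestOrder V R := by
  simp only [forestOrders, mem_filter, mem_powerset, and_iff_right_iff_imp]
  exact fun hR p hp => mem_product.2 (hR.mem_of_mem p.1 p.2 hp)

lemma forestOrders_empty : forestOrders (∅ : Finset α) = {∅} := by
  ext R
  rw [mem_forestOrders, mem_singleton]
  refine ⟨fun hR => eq_empty_of_forall_notMem fun p hp => ?_, ?_⟩
  · exact notMem_empty _ (hR.mem_of_mem p.1 p.2 hp).1
  · rintro rfl
    constructor <;> simp

namespace IsForestOrder

variable {V : Finset α} {R : Finset (α × α)}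

lemma isStrictOrder (hR : IsForestOrder V R) : IsStrictOrder α fun x y => (x, y) ∈ R where
  irrefl := hR.irrefl
  trans := hR.trans

lemma wellFounded (hR : IsForestOrder V R) : WellFounded fun x y => (x, y) ∈ R := by
  have := hR.isStrictOrder
  refine (Set.wellFoundedOn_iff.1 (V.wellFoundedOn (r := fun x y => (x, y) ∈ R))).mono ?_
  exact fun x y hxy => ⟨hxy, hR.mem_of_mem x y hxy⟩

lemma wellFounded_swap (hR : IsForestOrder V R) : WellFounded fun x y => (y, x) ∈ R := by
  have := hR.isStrictOrder
  have : IsStrictOrder α fun x y => (y, x) ∈ R := inferInstanceAs <|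
    IsStrictOrder α (Function.swap fun x y => (x, y) ∈ R)
  refine (Set.wellFoundedOn_iff.1 (V.wellFoundedOn (r := fun x y => (y, x) ∈ R))).mono ?_
  exact fun x y hxy => ⟨hxy, (hR.mem_of_mem y x hxy).symm⟩

lemma exists_root (hR : IsForestOrder V R) (v : α) :
    ∃ i, (i = v ∨ (v, i) ∈ R) ∧ ∀ y, (i, y) ∉ R := by
  obtain ⟨i, hi, hmax⟩ := hR.wellFounded_swap.has_min {i | i = v ∨ (v, i) ∈ R} ⟨v, Or.inl rfl⟩
  refine ⟨i, hi, fun y hiy => hmax y (Or.inr ?_) hiy⟩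
  rcases hi with rfl | hvi
  exacts [hiy, hR.trans _ _ _ hvi hiy]

variable [DecidableEq α]

lemma existsUnique_component (hR : IsForestOrder V R) {v : α} (hv : v ∈ V) :
    ∃! b : (_ : Finset α) × α, b ∈ (V.erase v).powerset.sigma (fun L => insert v L) ∧
      IsComponent R (insert v b.1) b.2 := by
  obtain ⟨i, hvi, hi⟩ := hR.exists_root v
  obtain ⟨hV, -, htrans, hchain⟩ := hR
  let S := {x ∈ V | x = i ∨ (x, i) ∈ R}
  have hS : insert v (S.erase v) = S := insert_erase (by grind)
  refine ⟨⟨S.erase v, i⟩, ⟨?_, ?_⟩, ?_⟩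
  · simp only [mem_sigma, mem_powerset, hS]
    grind
  · rw [hS]
    constructor <;> grind
  · rintro ⟨L, j⟩ ⟨hL, hroot, hbelow, htop, hclosed⟩
    simp only [mem_sigma, mem_powerset] at hL hroot hbelow htop hclosed
    obtain rfl : j = i := by grind
    suffices L = S.erase v by rw [this]
    ext x
    grind

lemma restrict (hR : IsForestOrder V R) (W : Finset α) : IsForestOrder W (R ∩ W ×ˢ W) := by
  obtain ⟨-, hirr, htrans, hchain⟩ := hR
  constructor <;> grind

end IsForestOrder

variable [DecidableEq α] {V S : Finset α} {R Q Q' : Finset (α × α)} {i : α}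

/-- The forest made of the tree with vertex set `S` and root `i`, whose proper subtrees form the
forest `Q` on `S.erase i`, and of a forest `Q'` away from `S`. -/
def graft (S : Finset α) (i : α) (Q Q' : Finset (α × α)) : Finset (α × α) :=
  Q ∪ Q' ∪ S.erase i ×ˢ {i}

lemma isForestOrder_graft (hQ : IsForestOrder (S.erase i) Q) (hQ' : IsForestOrder (V \ S) Q')
    (hS : S ⊆ V) (hi : i ∈ S) : IsForestOrder V (graft S i Q Q') := by
  obtain ⟨hQV, hQirr, hQtrans, hQchain⟩ := hQ
  obtain ⟨hQV', hQirr', hQtrans', hQchain'⟩ := hQ'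
  constructor <;> grind [graft]

lemma isComponent_graft (hQ : IsForestOrder (S.erase i) Q) (hQ' : IsForestOrder (V \ S) Q')
    (hi : i ∈ S) : IsComponent (graft S i Q Q') S i := by
  have hQV := hQ.mem_of_mem
  have hQV' := hQ'.mem_of_mem
  constructor <;> grind [graft]

lemma graft_inter_product_erase (hQ : IsForestOrder (S.erase i) Q)
    (hQ' : IsForestOrder (V \ S) Q') :
    graft S i Q Q' ∩ S.erase i ×ˢ S.erase i = Q := by
  have hQV := hQ.mem_of_mem
  have hQV' := hQ'.mem_of_mem
  ext ⟨x, y⟩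
  grind [graft]

lemma graft_inter_product_sdiff (hQ : IsForestOrder (S.erase i) Q)
    (hQ' : IsForestOrder (V \ S) Q') :
    graft S i Q Q' ∩ (V \ S) ×ˢ (V \ S) = Q' := by
  have hQV := hQ.mem_of_mem
  have hQV' := hQ'.mem_of_mem
  ext ⟨x, y⟩
  grind [graft]

lemma IsComponent.graft_restrict (hR : IsForestOrder V R) (h : IsComponent R S i) :
    graft S i (R ∩ S.erase i ×ˢ S.erase i) (R ∩ (V \ S) ×ˢ (V \ S)) = R := by
  obtain ⟨hV, hirr, htrans, -⟩ := hR
  obtain ⟨-, hbelow, -, hclosed⟩ := h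
  ext ⟨x, y⟩
  grind [graft]

end Forest

section ForestEnum

variable {A α : Type*} [CommSemiring A] [LinearOrder α]

/-- The number of pairs of vertices of the forest `R` in which the ancestor is the larger one. -/
def inversions (R : Finset (α × α)) : ℕ := #{p ∈ R | p.1 < p.2}

lemma inversions_graft {V S : Finset α} {Q Q' : Finset (α × α)} {i : α}
    (hQ : IsForestOrder (S.erase i) Q) (hQ' : IsForestOrder (V \ S) Q') :
    inversions (graft S i Q Q') = #{x ∈ S | x < i} + inversions Q + inversions Q' := by
  have hQV := hQ.mem_of_mem
  have hQV' := hQ'.mem_of_mem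
  have inversions_root : #{p ∈ S.erase i ×ˢ {i} | p.1 < p.2} = #{x ∈ S | x < i} := by
    rw [← card_image_of_injective {x ∈ S | x < i} (Prod.mk_left_injective i)]
    congr 1
    ext ⟨x, y⟩
    grind
  rw [inversions, graft, filter_union, filter_union, card_union_of_disjoint,
    card_union_of_disjoint, inversions_root, inversions, inversions]
  · ring
  · rw [disjoint_left]
    grind
  · rw [disjoint_left]
    grind

/-- The inversion enumerator of the rooted forests with vertex set `V`. -/
noncomputable def forestEnum (q : A) (V : Finset α) : A := ∑ R ∈ forestOrders V, q ^ inversions R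

lemma forestEnum_empty (q : A) : forestEnum q (∅ : Finset α) = 1 := by
  simp [forestEnum, forestOrders_empty, inversions]

open Classical in
lemma sum_forestOrders_isComponent (q : A) {V S : Finset α} {i : α} (hS : S ⊆ V) (hi : i ∈ S) :
    ∑ R ∈ forestOrders V with IsComponent R S i, q ^ inversions R =
      q ^ #{x ∈ S | x < i} * (forestEnum q (S.erase i) * forestEnum q (V \ S)) := by
  rw [forestEnum, forestEnum, sum_mul_sum, ← sum_product', mul_sum]
  symm
  refine sum_nbij' (fun Q => graft S i Q.1 Q.2)
    (fun R => (R ∩ S.erase i ×ˢ S.erase i, R ∩ (V \ S) ×ˢ (V \ S))) ?_ ?_ ?_ ?_ ?_ <;>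
    simp only [mem_product, mem_filter, mem_forestOrders, Prod.forall, Prod.mk.injEq]
  · exact fun Q Q' ⟨hQ, hQ'⟩ =>
      ⟨isForestOrder_graft hQ hQ' hS hi, isComponent_graft hQ hQ' hi⟩
  · exact fun R ⟨hR, _⟩ => ⟨hR.restrict _, hR.restrict _⟩
  · exact fun Q Q' ⟨hQ, hQ'⟩ =>
      ⟨graft_inter_product_erase hQ hQ', graft_inter_product_sdiff hQ hQ'⟩
  · exact fun R ⟨hR, h⟩ => h.graft_restrict hR
  · exact fun Q Q' ⟨hQ, hQ'⟩ => by rw [inversions_graft hQ hQ', pow_add, pow_add, mul_assoc]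

theorem forestEnum_eq_kreweras (q : A) (V : Finset α) : forestEnum q V = kreweras q #V := by
  classical
  induction V using Finset.strongInduction with | H V ih =>
  obtain rfl | ⟨v, hv⟩ := V.eq_empty_or_nonempty
  · rw [forestEnum_empty, card_empty, kreweras]
  rw [forestEnum, sum_eq_sum_sum_filter_of_existsUnique
    fun R hR => (mem_forestOrders.1 hR).existsUnique_component hv, sum_sigma,
    kreweras_card_eq_sum_powerset_erase q hv]
  refine sum_congr rfl fun L hL => ?_
  have hLV : L ⊆ V.erase v := mem_powerset.1 hL
  have hvL : v ∉ L := fun h => notMem_erase v V (hLV h)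
  have hS : insert v L ⊆ V := by grind
  calc ∑ i ∈ insert v L, ∑ R ∈ forestOrders V with IsComponent R (insert v L) i, q ^ inversions R
    _ = ∑ i ∈ insert v L, q ^ #{x ∈ insert v L | x < i} *
          (kreweras q #L * kreweras q #(V.erase v \ L)) := by
      refine sum_congr rfl fun i hi => ?_
      have hcard : #((insert v L).erase i) = #L := by
        rw [card_erase_of_mem hi, card_insert_of_notMem hvL, Nat.add_sub_cancel]
      have hsdiff : V \ insert v L = V.erase v \ L := by grind
      rw [sum_forestOrders_isComponent q hS hi, ih _ ((erase_ssubset hi).trans_subset hS),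
        ih _ (sdiff_ssubset hS ⟨v, mem_insert_self v L⟩), hcard, hsdiff]
    _ = _ := by
      rw [← sum_mul, sum_pow_card_filter_lt, card_insert_of_notMem hvL, mul_assoc]

end ForestEnum

section Parking

variable {α : Type*}

/-- `f` parks the cars of `V`: its values on `V` are positive and, for every `k ≤ #V`, at least `k`
cars of `V` prefer one of the first `k` spots. The values of `f` outside `V` are irrelevant. -/
def IsParking (V : Finset α) (f : α → ℕ) : Prop :=
  (∀ i ∈ V, 1 ≤ f i) ∧ ∀ k ≤ #V, k ≤ #{i ∈ V | f i ≤ k}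

/-- The cosum of the preferences of the cars of `V`; the subtraction is not truncated when `f`
parks these cars. -/
def cosumOn (V : Finset α) (f : α → ℕ) : ℕ := (#V + 1).choose 2 - ∑ i ∈ V, f i

/-- When the cars of `L ∪ M` have parked with preferences `f`, the first free spot is `#L + 1` and
the cars of `L` are those which have parked before it. -/
def IsGap (L M : Finset α) (f : α → ℕ) : Prop := IsParking L f ∧ ∀ i ∈ M, #L + 1 < f i

lemma isParking_congr {V : Finset α} {f g : α → ℕ} (h : ∀ i ∈ V, f i = g i) :
    IsParking V f ↔ IsParking V g := by
  have hcard : ∀ k, #{i ∈ V | f i ≤ k} = #{i ∈ V | g i ≤ k} := fun k =>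
    congrArg card (filter_congr fun i hi => by rw [h i hi])
  simp only [IsParking, hcard]
  exact and_congr_left fun _ => forall₂_congr fun i hi => by rw [h i hi]

lemma cosumOn_congr {V : Finset α} {f g : α → ℕ} (h : ∀ i ∈ V, f i = g i) :
    cosumOn V f = cosumOn V g := by
  rw [cosumOn, cosumOn, sum_congr rfl h]

lemma IsParking.le_card {V : Finset α} {f : α → ℕ} (h : IsParking V f) {i : α} (hi : i ∈ V) :
    f i ≤ #V := by
  have hV : {i ∈ V | f i ≤ #V} = V := eq_of_subset_of_card_le (filter_subset _ _) (h.2 _ le_rfl)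
  exact (filter_eq_self.1 hV) i hi

lemma sum_range_tsub (m : ℕ) : ∑ k ∈ range m, (m - k) = (m + 1).choose 2 := by
  induction m with
  | zero => simp
  | succ m ih =>
    rw [sum_range_succ', Nat.choose_succ_succ' (m + 1), Nat.choose_one_right, ← ih, add_comm]
    simp

lemma add_choose_two (a b : ℕ) : (a + b).choose 2 = a.choose 2 + b.choose 2 + a * b := by
  induction b with
  | zero => simp
  | succ b ih =>
    rw [← add_assoc, Nat.choose_succ_succ', Nat.choose_succ_succ' b, ih, Nat.choose_one_right,
      Nat.choose_one_right]
    ring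

lemma IsParking.sum_le_choose {V : Finset α} {f : α → ℕ} (h : IsParking V f) :
    ∑ i ∈ V, f i ≤ (#V + 1).choose 2 :=
  calc ∑ i ∈ V, f i
    _ = ∑ i ∈ V, #{k ∈ range #V | k < f i} := by
      refine sum_congr rfl fun i hi => ?_
      have hfi := h.le_card hi
      rw [← card_range (f i)]
      congr 1
      ext k
      grind
    _ = ∑ k ∈ range #V, #{i ∈ V | k < f i} :=
      sum_card_bipartiteAbove_eq_sum_card_bipartiteBelow fun i k => k < f i
    _ ≤ ∑ k ∈ range #V, (#V - k) := by
      refine sum_le_sum fun k hk => ?_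
      have hsplit := card_filter_add_card_filter_not (s := V) fun i => f i ≤ k
      simp only [not_le] at hsplit
      have hcount := h.2 k (mem_range.1 hk).le
      omega
    _ = (#V + 1).choose 2 := sum_range_tsub _

variable [DecidableEq α]

lemma IsGap.eq_filter {L U : Finset α} {f : α → ℕ} (hL : L ⊆ U) (h : IsGap L (U \ L) f) :
    L = {i ∈ U | f i ≤ #L + 1} := by
  ext i
  have hle : i ∈ L → f i ≤ #L := h.1.le_card
  have hgap := h.2 i
  grind

lemma IsGap.card_le {L L' U : Finset α} {f : α → ℕ} (hL : L ⊆ U) (h : IsGap L (U \ L) f)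
    (hL' : L' ⊆ U) (h' : IsGap L' (U \ L') f) : #L' ≤ #L := by
  by_contra! hlt
  have hcount := h'.1.2 (#L + 1) hlt
  have hmono := card_le_card (filter_subset_filter (fun i => f i ≤ #L + 1) hL')
  rw [← h.eq_filter hL] at hmono
  omega

lemma existsUnique_isGap {U : Finset α} {f : α → ℕ} (hf : ∀ i ∈ U, 1 ≤ f i) :
    ∃! L, L ∈ U.powerset ∧ IsGap L (U \ L) f := by
  have hex : ∃ e, #{i ∈ U | f i ≤ e + 1} ≤ e := ⟨#U, card_filter_le _ _⟩
  let e := Nat.find hex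
  let L := {i ∈ U | f i ≤ e + 1}
  have hLU : L ⊆ U := filter_subset _ _
  have count_of_le : ∀ k ≤ e, k ≤ #{i ∈ U | f i ≤ k}
    | 0, _ => Nat.zero_le _
    | k + 1, hk => not_le.1 (Nat.find_min hex hk)
  have hcard : #L = e := (Nat.find_spec hex).antisymm <|
    (count_of_le e le_rfl).trans (card_le_card fun i => by grind)
  have hgap : IsGap L (U \ L) f := by
    refine ⟨⟨fun i hi => hf i (hLU hi), fun k hk => ?_⟩, by grind⟩
    have hfilter : {i ∈ L | f i ≤ k} = {i ∈ U | f i ≤ k} := by grind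
    rw [hfilter]
    exact count_of_le k (hk.trans hcard.le)
  refine ⟨L, ⟨mem_powerset.2 hLU, hgap⟩, fun L' ⟨hL', hgap'⟩ => ?_⟩
  rw [mem_powerset] at hL'
  rw [hgap'.eq_filter hL', hgap.eq_filter hLU,
    (hgap.card_le hLU hL' hgap').antisymm (hgap'.card_le hL' hLU hgap)]

lemma sum_eq_add_sum_add_sum_sdiff {M : Type*} [AddCommMonoid M] {V L : Finset α} {v : α}
    (hv : v ∈ V) (hL : L ⊆ V.erase v) (g : α → M) :
    ∑ i ∈ V, g i = g v + (∑ i ∈ L, g i + ∑ i ∈ V.erase v \ L, g i) := by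
  rw [← add_sum_erase V g hv, ← sum_sdiff hL, add_comm (∑ i ∈ L, g i)]

section LastCar

variable {V L : Finset α} {v : α} {f : α → ℕ}

lemma card_eq_card_add_card_sdiff (hv : v ∈ V) (hL : L ⊆ V.erase v) :
    #V = #L + 1 + #(V.erase v \ L) := by
  rw [← card_erase_add_one hv, ← card_sdiff_add_card_eq_card hL]
  ring

lemma IsGap.card_filter_le_eq (hv : v ∈ V) (hL : L ⊆ V.erase v) (h : IsGap L (V.erase v \ L) f)
    {k : ℕ} (hk : #L ≤ k) :
    #{i ∈ V | f i ≤ k} = (if f v ≤ k then 1 else 0) + (#L + #{i ∈ V.erase v \ L | f i ≤ k}) := by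
  have hcard_left : #{i ∈ L | f i ≤ k} = #L := by
    rw [filter_true_of_mem fun i hi => (h.1.le_card hi).trans hk]
  rw [card_filter, sum_eq_add_sum_add_sum_sdiff hv hL, ← card_filter, ← card_filter, hcard_left]

lemma IsGap.apply_le_of_isParking (hv : v ∈ V) (hL : L ⊆ V.erase v)
    (h : IsGap L (V.erase v \ L) f) (hf : IsParking V f) : f v ≤ #L + 1 := by
  by_contra! hlt
  have none_beyond : #{i ∈ V.erase v \ L | f i ≤ #L + 1} = 0 := by
    rw [card_eq_zero, filter_eq_empty_iff]
    exact fun i hi => not_le.2 (h.2 i hi)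
  have hcard := card_eq_card_add_card_sdiff hv hL
  have hcount := hf.2 (#L + 1) (by omega)
  rw [h.card_filter_le_eq hv hL (Nat.le_succ _), if_neg hlt.not_ge, none_beyond] at hcount
  omega

lemma IsGap.isParking_iff (hv : v ∈ V) (hL : L ⊆ V.erase v) (h : IsGap L (V.erase v \ L) f) :
    IsParking V f ↔
      (1 ≤ f v ∧ f v ≤ #L + 1) ∧ IsParking (V.erase v \ L) fun i => f i - (#L + 1) := by
  have hcard := card_eq_card_add_card_sdiff hv hL
  constructor
  · intro hf
    have hfv := h.apply_le_of_isParking hv hL hf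
    refine ⟨⟨hf.1 v hv, hfv⟩, fun i hi => Nat.sub_pos_of_lt (h.2 i hi), fun k hk => ?_⟩
    have hcount := hf.2 (k + (#L + 1)) (by omega)
    rw [h.card_filter_le_eq hv hL (by omega), if_pos (by omega)] at hcount
    simp only [tsub_le_iff_right]
    omega
  · rintro ⟨⟨hpos, hfv⟩, hpark⟩
    refine ⟨fun i hi => ?_, fun k hk => ?_⟩
    · have hposL := h.1.1 i
      have hbeyond := h.2 i
      grind
    rcases le_or_gt k #L with hkL | hkL
    · exact (h.1.2 k hkL).trans (card_le_card (filter_subset_filter _ fun i hi =>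
        mem_of_mem_erase (hL hi)))
    · have hcount := hpark.2 (k - (#L + 1)) (by omega)
      simp only [tsub_le_iff_right, Nat.sub_add_cancel hkL] at hcount
      rw [h.card_filter_le_eq hv hL hkL.le, if_pos (by omega)]
      omega

lemma IsGap.cosumOn_eq (hv : v ∈ V) (hL : L ⊆ V.erase v)
    (h : IsGap L (V.erase v \ L) f) (hf : IsParking V f) :
    cosumOn V f = #L + 1 - f v +
      (cosumOn L f + cosumOn (V.erase v \ L) fun i => f i - (#L + 1)) := by
  obtain ⟨⟨-, hfv⟩, hpark⟩ := (h.isParking_iff hv hL).1 hf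
  have hsum := sum_eq_add_sum_add_sum_sdiff hv hL f
  have hbeyond : ∑ i ∈ V.erase v \ L, f i =
      ∑ i ∈ V.erase v \ L, (f i - (#L + 1)) + (#L + 1) * #(V.erase v \ L) := by
    rw [mul_comm, ← smul_eq_mul, ← sum_const, ← sum_add_distrib]
    exact sum_congr rfl fun i hi => (Nat.sub_add_cancel (h.2 i hi).le).symm
  have hchoose := add_choose_two (#L + 1) (#(V.erase v \ L) + 1)
  have hle := h.1.sum_le_choose
  have hle' := hpark.sum_le_choose
  rw [cosumOn, cosumOn, cosumOn, card_eq_card_add_card_sdiff hv hL, add_assoc, hchoose, hsum,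
    hbeyond, mul_add, mul_one]
  omega

end LastCar

lemma piecewise_zero_eq {M : Type*} [Zero M] {L : Finset α} {f g : α → M}
    (h : ∀ i ∈ L, f i = g i) (hg : ∀ i ∉ L, g i = 0) : L.piecewise f 0 = g := by
  ext i
  by_cases hi : i ∈ L
  · rw [piecewise_eq_of_mem _ _ _ hi, h i hi]
  · rw [piecewise_eq_of_notMem _ _ _ hi, hg i hi, Pi.zero_apply]

/-- The preferences of the cars of `V` in which the cars of `L` follow `g`, those of `V.erase v \ L`
follow `h` beyond the gap `#L + 1`, and `v` prefers the spot `r` places before that gap. -/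
def glue (V L : Finset α) (v : α) (r : ℕ) (g h : α → ℕ) : α → ℕ :=
  L.piecewise g <| (V.erase v \ L).piecewise (fun i => h i + (#L + 1)) <|
    Pi.single v (#L + 1 - r)

section Glue

variable {V L : Finset α} {v i : α} {r : ℕ} {f g h : α → ℕ}

lemma glue_of_mem_left (hi : i ∈ L) : glue V L v r g h i = g i :=
  piecewise_eq_of_mem _ _ _ hi

lemma glue_of_mem_sdiff (hi : i ∈ V.erase v \ L) : glue V L v r g h i = h i + (#L + 1) := by
  rw [glue, piecewise_eq_of_notMem _ _ _ (mem_sdiff.1 hi).2, piecewise_eq_of_mem _ _ _ hi]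

lemma glue_self (hL : L ⊆ V.erase v) : glue V L v r g h v = #L + 1 - r := by
  rw [glue, piecewise_eq_of_notMem _ _ _ fun hvL => notMem_erase v V (hL hvL),
    piecewise_eq_of_notMem _ _ _ (by simp), Pi.single_eq_same]

lemma glue_of_notMem (hv : v ∈ V) (hL : L ⊆ V.erase v) (hi : i ∉ V) :
    glue V L v r g h i = 0 := by
  rw [glue, piecewise_eq_of_notMem _ _ _ (by grind), piecewise_eq_of_notMem _ _ _ (by grind),
    Pi.single_eq_of_ne (by grind)]

lemma isGap_glue (hg : IsParking L g) (hh : IsParking (V.erase v \ L) h) :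
    IsGap L (V.erase v \ L) (glue V L v r g h) := by
  refine ⟨(isParking_congr fun i hi => glue_of_mem_left hi).2 hg, fun i hi => ?_⟩
  have hpos := hh.1 i hi
  rw [glue_of_mem_sdiff hi]
  omega

lemma glue_sub_of_mem_sdiff (hi : i ∈ V.erase v \ L) :
    glue V L v r g h i - (#L + 1) = h i := by
  rw [glue_of_mem_sdiff hi, Nat.add_sub_cancel]

lemma isParking_glue (hv : v ∈ V) (hL : L ⊆ V.erase v) (hr : r < #L + 1) (hg : IsParking L g)
    (hh : IsParking (V.erase v \ L) h) : IsParking V (glue V L v r g h) := by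
  rw [(isGap_glue hg hh).isParking_iff hv hL, glue_self hL]
  exact ⟨by omega, (isParking_congr fun i hi => glue_sub_of_mem_sdiff hi).2 hh⟩

lemma cosumOn_glue (hv : v ∈ V) (hL : L ⊆ V.erase v) (hr : r < #L + 1) (hg : IsParking L g)
    (hh : IsParking (V.erase v \ L) h) :
    cosumOn V (glue V L v r g h) = r + (cosumOn L g + cosumOn (V.erase v \ L) h) := by
  rw [(isGap_glue hg hh).cosumOn_eq hv hL (isParking_glue hv hL hr hg hh), glue_self hL,
    cosumOn_congr (g := g) fun i hi => glue_of_mem_left hi,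
    cosumOn_congr (g := h) fun i hi => glue_sub_of_mem_sdiff hi]
  omega

lemma IsGap.glue_eq (hv : v ∈ V) (hL : L ⊆ V.erase v) (hgap : IsGap L (V.erase v \ L) f)
    (hfv : f v ≤ #L + 1) (hf : ∀ i ∉ V, f i = 0) :
    glue V L v (#L + 1 - f v) (L.piecewise f 0)
      ((V.erase v \ L).piecewise (fun i => f i - (#L + 1)) 0) = f := by
  ext i
  have hbeyond := hgap.2 i
  by_cases hiL : i ∈ L
  · simp [glue_of_mem_left hiL, hiL]
  by_cases hiM : i ∈ V.erase v \ L
  · rw [glue_of_mem_sdiff hiM, piecewise_eq_of_mem _ _ _ hiM,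
      Nat.sub_add_cancel (hbeyond hiM).le]
  by_cases hiv : i = v
  · rw [hiv, glue_self hL, Nat.sub_sub_self hfv]
  · have hiV : i ∉ V := by grind
    rw [hf i hiV, glue_of_notMem hv hL hiV]

end Glue

end Parking

section ParkingEnum

variable {A α : Type*} [CommSemiring A] [Fintype α] [DecidableEq α]

open Classical in
/-- The parking functions on the set of cars `V`, extended by `0` outside `V`. -/
noncomputable def parkingFunctions (V : Finset α) : Finset (α → ℕ) :=
  {f ∈ Fintype.piFinset fun _ => range (#V + 1) | (∀ i ∉ V, f i = 0) ∧ IsParking V f}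

lemma mem_parkingFunctions {V : Finset α} {f : α → ℕ} :
    f ∈ parkingFunctions V ↔ (∀ i ∉ V, f i = 0) ∧ IsParking V f := by
  simp only [parkingFunctions, mem_filter, Fintype.mem_piFinset, mem_range, and_iff_right_iff_imp]
  rintro ⟨hzero, hf⟩ i
  by_cases hi : i ∈ V
  · exact Nat.lt_succ_of_le (hf.le_card hi)
  · rw [hzero i hi]
    exact Nat.succ_pos _

/-- The cosum enumerator of the parking functions on the set of cars `V`. -/
noncomputable def parkingEnum (q : A) (V : Finset α) : A :=
  ∑ f ∈ parkingFunctions V, q ^ cosumOn V f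

lemma parkingEnum_empty (q : A) : parkingEnum q (∅ : Finset α) = 1 := by
  have hempty : parkingFunctions (∅ : Finset α) = {0} := by
    ext f
    simp [mem_parkingFunctions, IsParking, funext_iff]
  simp [parkingEnum, hempty, cosumOn]

open Classical in
lemma sum_parkingFunctions_isGap (q : A) {V L : Finset α} {v : α} (hv : v ∈ V)
    (hL : L ⊆ V.erase v) :
    ∑ f ∈ parkingFunctions V with IsGap L (V.erase v \ L) f, q ^ cosumOn V f =
      (∑ r ∈ range (#L + 1), q ^ r) * (parkingEnum q L * parkingEnum q (V.erase v \ L)) := by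
  rw [parkingEnum, parkingEnum, sum_mul_sum, ← sum_product', sum_mul_sum, ← sum_product']
  symm
  refine sum_nbij' (fun p => glue V L v p.1 p.2.1 p.2.2)
    (fun f => (#L + 1 - f v, L.piecewise f 0,
      (V.erase v \ L).piecewise (fun i => f i - (#L + 1)) 0)) ?_ ?_ ?_ ?_ ?_ <;>
    simp only [mem_product, mem_filter, mem_parkingFunctions, mem_range, Prod.forall,
      Prod.mk.injEq]
  · exact fun r g h ⟨hr, ⟨_, hg⟩, _, hh⟩ =>
      ⟨⟨fun i => glue_of_notMem hv hL, isParking_glue hv hL hr hg hh⟩, isGap_glue hg hh⟩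
  · rintro f ⟨⟨-, hf⟩, hgap⟩
    obtain ⟨⟨hpos, -⟩, hpark⟩ := (hgap.isParking_iff hv hL).1 hf
    refine ⟨by omega, ⟨fun i => piecewise_eq_of_notMem _ _ _, ?_⟩,
      fun i => piecewise_eq_of_notMem _ _ _, ?_⟩
    · exact (isParking_congr fun i => piecewise_eq_of_mem _ _ _).2 hgap.1
    · exact (isParking_congr fun i => piecewise_eq_of_mem _ _ _).2 hpark
  · rintro r g h ⟨hr, ⟨hg, -⟩, hh, -⟩
    rw [glue_self hL, Nat.sub_sub_self hr.le]
    exact ⟨rfl, piecewise_zero_eq (fun i => glue_of_mem_left) hg,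
      piecewise_zero_eq (fun i => glue_sub_of_mem_sdiff) hh⟩
  · rintro f ⟨⟨hzero, hf⟩, hgap⟩
    exact hgap.glue_eq hv hL ((hgap.isParking_iff hv hL).1 hf).1.2 hzero
  · rintro r g h ⟨hr, ⟨-, hg⟩, -, hh⟩
    rw [cosumOn_glue hv hL hr hg hh, pow_add, pow_add]

theorem parkingEnum_eq_kreweras (q : A) (V : Finset α) : parkingEnum q V = kreweras q #V := by
  classical
  induction V using Finset.strongInduction with | H V ih =>
  obtain rfl | ⟨v, hv⟩ := V.eq_empty_or_nonempty
  · rw [parkingEnum_empty, card_empty, kreweras]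
  have pos_of_mem : ∀ f ∈ parkingFunctions V, ∀ i ∈ V.erase v, 1 ≤ f i := fun f hf i hi =>
    (mem_parkingFunctions.1 hf).2.1 i (mem_of_mem_erase hi)
  rw [parkingEnum, sum_eq_sum_sum_filter_of_existsUnique
    fun f hf => existsUnique_isGap (pos_of_mem f hf), kreweras_card_eq_sum_powerset_erase q hv]
  refine sum_congr rfl fun L hL => ?_
  have hLV : L ⊆ V.erase v := mem_powerset.1 hL
  rw [sum_parkingFunctions_isGap q hv hLV, ih L (hLV.trans_ssubset (erase_ssubset hv)),
    ih _ (sdiff_subset.trans_ssubset (erase_ssubset hv)), mul_assoc]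

lemma isPF_iff_isParking {n : ℕ} {π : Fin n → ℕ} : IsPF n π ↔ IsParking univ π := by
  have sorted_le_iff (σ : Equiv.Perm (Fin n)) (hσ : Monotone fun j => π (σ j)) (j : Fin n) :
      π (σ j) ≤ j + 1 ↔ j + 1 ≤ #{i | π i ≤ j + 1} := by
    rw [← Tuple.lt_card_le_iff_apply_le_of_monotone hσ, Nat.lt_iff_add_one_le,
      card_equiv (t := {i | π i ≤ j + 1}) σ (by simp)]
  refine and_congr (by simp) ⟨fun ⟨σ, hσ, hle⟩ k hk => ?_, fun h => ?_⟩
  · obtain _ | k := k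
    · exact Nat.zero_le _
    · rw [card_fin] at hk
      exact (sorted_le_iff σ hσ ⟨k, hk⟩).1 (hle ⟨k, hk⟩)
  · refine ⟨Tuple.sort π, Tuple.monotone_sort π, fun j => ?_⟩
    exact (sorted_le_iff _ (Tuple.monotone_sort π) j).2 (h _ (by simp))

theorem finsum_cosum_eq_kreweras (q : A) (n : ℕ) :
    ∑ᶠ π ∈ {π : Fin n → ℕ | IsPF n π}, q ^ cosum n π = kreweras q n := by
  have hset : {π : Fin n → ℕ | IsPF n π} = ↑(parkingFunctions (univ : Finset (Fin n))) := by
    ext π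
    simp [mem_parkingFunctions, isPF_iff_isParking]
  have hcosum (π : Fin n → ℕ) : cosum n π = cosumOn univ π := by
    rw [cosum, cosumOn, card_univ, Fintype.card_fin]
  simp_rw [hset, finsum_mem_coe_finset, hcosum]
  rw [← parkingEnum, parkingEnum_eq_kreweras, card_fin]

end ParkingEnum

section ParentGraph

variable {α : Type*} {V S : Finset α} {R : Finset (α × α)} {r i j : α}

/-- `j` is the parent of `i` in the rooted forest `R`: the least proper ancestor of `i`. -/
def IsParent (R : Finset (α × α)) (i j : α) : Prop :=
  (i, j) ∈ R ∧ ∀ k, (i, k) ∈ R → k = j ∨ (j, k) ∈ R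

/-- The graph underlying the rooted forest `R`. -/
def parentGraph (R : Finset (α × α)) : SimpleGraph α := SimpleGraph.fromRel (IsParent R)

namespace IsForestOrder

lemma exists_isParent (hR : IsForestOrder V R) (hij : (i, j) ∈ R) : ∃ k, IsParent R i k := by
  obtain ⟨k, hik, hmin⟩ := hR.wellFounded.has_min {k | (i, k) ∈ R} ⟨j, hij⟩
  refine ⟨k, hik, fun l hil => ?_⟩
  rcases hR.chain i l k hil hik with hlk | hlk | hkl
  exacts [Or.inl hlk, absurd hlk (hmin l hil), Or.inr hkl]

lemma isParent_unique (hR : IsForestOrder V R) {k : α} (hj : IsParent R i j)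
    (hk : IsParent R i k) : j = k := by
  rcases hj.2 k hk.1, hk.2 j hj.1 with ⟨h | h, h' | h'⟩
  exacts [h.symm, h.symm, h', absurd (hR.trans _ _ _ h h') (hR.irrefl _)]

lemma parentGraph_adj (hR : IsForestOrder V R) :
    (parentGraph R).Adj i j ↔ IsParent R i j ∨ IsParent R j i := by
  have ne_of_isParent {i j : α} (h : IsParent R i j) : i ≠ j := by
    rintro rfl
    exact hR.irrefl i h.1
  rw [parentGraph, SimpleGraph.fromRel_adj, and_iff_right_iff_imp]
  rintro (h | h)
  exacts [ne_of_isParent h, (ne_of_isParent h).symm]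

/-- The edge from `i` to its parent is the only one which leaves the subtree rooted at `i`. -/
lemma mem_edges_of_isParent (hR : IsForestOrder V R) (hij : IsParent R i j)
    (p : (parentGraph R).Walk i j) : s(i, j) ∈ p.edges := by
  have hj : j ∉ {x | x = i ∨ (x, i) ∈ R} := by
    rintro (rfl | hji)
    exacts [hR.irrefl j hij.1, hR.irrefl i (hR.trans _ _ _ hij.1 hji)]
  obtain ⟨⟨⟨x, y⟩, hxy⟩, hd, hx, hy⟩ := p.exists_boundary_dart _ (Or.inl rfl) hj
  have hmem : s(x, y) ∈ p.edges := List.mem_map_of_mem hd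
  simp only [Set.mem_ofPred_eq, not_or] at hx hy
  rcases hR.parentGraph_adj.1 hxy with hxy | hyx
  · rcases hx with rfl | hxi
    · obtain rfl : y = j := hR.isParent_unique hxy hij
      exact hmem
    · rcases hxy.2 i hxi with rfl | hyi
      exacts [absurd rfl hy.1, absurd hyi hy.2]
  · rcases hx with rfl | hxi
    exacts [absurd hyx.1 hy.2, absurd (hR.trans _ _ _ hyx.1 hxi) hy.2]

lemma isAcyclic_parentGraph (hR : IsForestOrder V R) : (parentGraph R).IsAcyclic := by
  rw [SimpleGraph.isAcyclic_iff_forall_adj_isBridge]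
  intro i j hij
  rcases hR.parentGraph_adj.1 hij with h | h
  · exact SimpleGraph.isBridge_iff_forall_walk_mem_edges.2 (hR.mem_edges_of_isParent h)
  · rw [Sym2.eq_swap]
    exact SimpleGraph.isBridge_iff_forall_walk_mem_edges.2 (hR.mem_edges_of_isParent h)

lemma exists_isPath (hR : IsForestOrder V R) (hS : IsComponent R S r) (hi : i ∈ S) :
    ∃ p : (parentGraph R).Walk i r, p.IsPath ∧ ∀ j, j ∈ p.support ↔ j = i ∨ (i, j) ∈ R := by
  induction i using hR.wellFounded_swap.induction with | _ i ih =>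
  by_cases hir : i = r
  · subst hir
    exact ⟨.nil, .nil, fun j => by simp [hS.root_top]⟩
  · obtain ⟨k, hik⟩ := hR.exists_isParent (hS.below_root i hi hir)
    obtain ⟨p, hp, hsupp⟩ := ih k hik.1 ((hS.closed _ _ hik.1).1 hi)
    refine ⟨.cons (hR.parentGraph_adj.2 (.inl hik)) p, hp.cons ?_, fun j => ?_⟩
    · rw [hsupp]
      rintro (rfl | hki)
      exacts [hR.irrefl i hik.1, hR.irrefl i (hR.trans _ _ _ hik.1 hki)]
    · rw [SimpleGraph.Walk.support_cons, List.mem_cons, hsupp]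
      refine or_congr_right ⟨?_, hik.2 j⟩
      rintro (rfl | hkj)
      exacts [hik.1, hR.trans _ _ _ hik.1 hkj]

lemma isTree_parentGraph [Fintype α] (hR : IsForestOrder V R) (h : IsComponent R univ r) :
    (parentGraph R).IsTree := by
  have reachable_root (i : α) : (parentGraph R).Reachable i r :=
    (hR.exists_isPath h (mem_univ i)).elim fun p _ => ⟨p⟩
  have : Nonempty α := ⟨r⟩
  exact ⟨⟨fun i j => (reachable_root i).trans (reachable_root j).symm⟩, hR.isAcyclic_parentGraph⟩

end IsForestOrder

end ParentGraph

section Trees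

variable {n : ℕ} {T : SimpleGraph (Fin (n + 1))} {i j k : Fin (n + 1)}

lemma onPath_iff_mem_support (hT : T.IsAcyclic) {p : T.Walk i 0} (hp : p.IsPath) :
    OnPath T i j ↔ j ∈ p.support := by
  refine ⟨fun h => h p hp, fun h p' hp' => ?_⟩
  have := hT.subsingleton_path i 0
  have hpp' : p' = p := congrArg Subtype.val (Subsingleton.elim (⟨p', hp'⟩ : T.Path i 0) ⟨p, hp⟩)
  rwa [hpp']

lemma onPath_zero : OnPath T i 0 := fun p _ => p.end_mem_support

lemma OnPath.trans (hT : T.IsTree) (hij : OnPath T i j) (hjk : OnPath T j k) : OnPath T i k := by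
  obtain ⟨p, hp, -⟩ := hT.existsUnique_path i 0
  obtain ⟨q, r, rfl⟩ := SimpleGraph.Walk.mem_support_iff_exists_append.1 (hij p hp)
  rw [onPath_iff_mem_support hT.isAcyclic hp, SimpleGraph.Walk.mem_support_append_iff]
  exact Or.inr (hjk r hp.of_append_right)

lemma OnPath.antisymm (hT : T.IsTree) (hij : OnPath T i j) (hji : OnPath T j i) : i = j := by
  obtain ⟨p, hp, huniq⟩ := hT.existsUnique_path i 0
  obtain ⟨q, r, hqr⟩ := SimpleGraph.Walk.mem_support_iff_exists_append.1 (hij p hp)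
  have hr : r.IsPath := (hqr ▸ hp).of_append_right
  obtain ⟨q', p', hqp⟩ := SimpleGraph.Walk.mem_support_iff_exists_append.1 (hji r hr)
  have hp' : p' = p := huniq p' (hqp ▸ hr).of_append_right
  have hlen : p.length = q.length + (q'.length + p'.length) := by
    rw [hqr, hqp, SimpleGraph.Walk.length_append, SimpleGraph.Walk.length_append]
  rw [hp'] at hlen
  exact SimpleGraph.Walk.eq_of_length_eq_zero (p := q) (by omega)

lemma OnPath.chain (hT : T.IsTree) (hij : OnPath T i j) (hik : OnPath T i k) :
    OnPath T j k ∨ OnPath T k j := by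
  obtain ⟨p, hp, -⟩ := hT.existsUnique_path i 0
  obtain ⟨q, r, rfl⟩ := SimpleGraph.Walk.mem_support_iff_exists_append.1 (hij p hp)
  rcases SimpleGraph.Walk.mem_support_append_iff _ _ |>.1 (hik _ hp) with hk | hk
  · obtain ⟨q₁, q₂, rfl⟩ := SimpleGraph.Walk.mem_support_iff_exists_append.1 hk
    rw [← SimpleGraph.Walk.append_assoc] at hp
    rw [onPath_iff_mem_support hT.isAcyclic hp.of_append_right (j := j),
      SimpleGraph.Walk.mem_support_append_iff]
    exact Or.inr (Or.inl q₂.end_mem_support)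
  · exact Or.inl ((onPath_iff_mem_support hT.isAcyclic hp.of_append_right).2 hk)

open Classical in
/-- The strict ancestor relation of the tree `T` rooted at `0`. -/
noncomputable def ancestors (T : SimpleGraph (Fin (n + 1))) : Finset (Fin (n + 1) × Fin (n + 1)) :=
  {p | p.1 ≠ p.2 ∧ OnPath T p.1 p.2}

lemma mem_ancestors : (i, j) ∈ ancestors T ↔ i ≠ j ∧ OnPath T i j := by
  simp [ancestors]

lemma isForestOrder_ancestors (hT : T.IsTree) : IsForestOrder univ (ancestors T) where
  mem_of_mem _ _ _ := ⟨mem_univ _, mem_univ _⟩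
  irrefl x := by simp [mem_ancestors]
  trans x y z := by
    simp only [mem_ancestors]
    rintro ⟨hne, hxy⟩ ⟨-, hyz⟩
    refine ⟨?_, hxy.trans hT hyz⟩
    rintro rfl
    exact hne (hxy.antisymm hT hyz)
  chain x y z := by
    simp only [mem_ancestors]
    rintro ⟨-, hxy⟩ ⟨-, hxz⟩
    have := hxy.chain hT hxz
    grind

lemma isComponent_ancestors (hT : T.IsTree) : IsComponent (ancestors T) univ 0 where
  root_mem := mem_univ 0
  below_root x _ hx := mem_ancestors.2 ⟨hx, onPath_zero⟩
  root_top y hy := (mem_ancestors.1 hy).1 ((mem_ancestors.1 hy).2.antisymm hT onPath_zero)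
  closed x y _ := by simp

lemma parentGraph_ancestors (hT : T.IsTree) : parentGraph (ancestors T) = T := by
  have hanc := isForestOrder_ancestors hT
  have isParent_of_adj {i j : Fin (n + 1)} (hij : T.Adj i j) (hji : ¬ OnPath T j i) :
      IsParent (ancestors T) i j := by
    obtain ⟨p, hp, -⟩ := hT.existsUnique_path j 0
    rw [onPath_iff_mem_support hT.isAcyclic hp] at hji
    have onPath_iff (k : Fin (n + 1)) : OnPath T i k ↔ k = i ∨ OnPath T j k := by
      rw [onPath_iff_mem_support hT.isAcyclic (hp.cons (h := hij) hji),
        onPath_iff_mem_support hT.isAcyclic hp, SimpleGraph.Walk.support_cons, List.mem_cons]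
    simp only [IsParent, mem_ancestors, onPath_iff]
    refine ⟨⟨hij.ne, Or.inr fun p _ => p.start_mem_support⟩, ?_⟩
    grind
  have hle : T ≤ parentGraph (ancestors T) := fun i j hij => by
    refine hanc.parentGraph_adj.2 ?_
    by_cases hji : OnPath T j i
    · exact Or.inr (isParent_of_adj hij.symm fun h => hij.ne (h.antisymm hT hji))
    · exact Or.inl (isParent_of_adj hij hji)
  have hmax := (SimpleGraph.isTree_iff_maximal_isAcyclic.1 hT).2
  exact (hmax.eq_of_le hanc.isAcyclic_parentGraph hle).symm

lemma ancestors_parentGraph {V : Finset (Fin (n + 1))} {R : Finset (Fin (n + 1) × Fin (n + 1))}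
    (hR : IsForestOrder V R) (h : IsComponent R univ 0) : ancestors (parentGraph R) = R := by
  ext ⟨i, j⟩
  obtain ⟨p, hp, hsupp⟩ := hR.exists_isPath h (mem_univ i)
  rw [mem_ancestors, onPath_iff_mem_support hR.isAcyclic_parentGraph hp, hsupp]
  have hirr := hR.irrefl i
  grind

lemma treeInv_eq_inversions_ancestors (hT : T.IsTree) : treeInv T = inversions (ancestors T) := by
  refine Nat.subtype_card _ fun ⟨i, j⟩ => ?_
  have pos_of_onPath (hlt : i < j) (hij : OnPath T i j) : 0 < i.val := by
    refine Nat.pos_of_ne_zero fun hi => hlt.ne (hij.antisymm hT ?_)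
    obtain rfl : i = 0 := Fin.ext hi
    exact onPath_zero
  simp only [mem_filter, mem_ancestors]
  grind

lemma bijOn_ancestors : Set.BijOn ancestors {T : SimpleGraph (Fin (n + 1)) | T.IsTree}
    {R | IsForestOrder univ R ∧ IsComponent R univ 0} :=
  Set.InvOn.bijOn (f' := parentGraph)
    ⟨fun _ => parentGraph_ancestors, fun _ hR => ancestors_parentGraph hR.1 hR.2⟩
    (fun _ hT => ⟨isForestOrder_ancestors hT, isComponent_ancestors hT⟩)
    fun _ hR => hR.1.isTree_parentGraph hR.2

theorem finsum_treeInv_eq_kreweras {A : Type*} [CommSemiring A] (q : A) (n : ℕ) :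
    ∑ᶠ T : {G : SimpleGraph (Fin (n + 1)) // G.IsTree}, q ^ treeInv T.val = kreweras q n := by
  classical
  calc ∑ᶠ T : {G : SimpleGraph (Fin (n + 1)) // G.IsTree}, q ^ treeInv T.val
    _ = ∑ᶠ T ∈ {G : SimpleGraph (Fin (n + 1)) | G.IsTree}, q ^ treeInv T :=
      finsum_set_coe_eq_finsum_mem (f := fun T => q ^ treeInv T) _
    _ = ∑ᶠ R ∈ {R | IsForestOrder univ R ∧ IsComponent R univ (0 : Fin (n + 1))},
          q ^ inversions R :=
      finsum_mem_eq_of_bijOn _ bijOn_ancestors fun T hT => by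
        rw [treeInv_eq_inversions_ancestors hT]
    _ = ∑ R ∈ forestOrders univ with IsComponent R univ (0 : Fin (n + 1)), q ^ inversions R := by
      simp_rw [← finsum_mem_coe_finset, coe_filter, mem_forestOrders]
    _ = kreweras q n := by
      rw [sum_forestOrders_isComponent q subset_rfl (mem_univ 0), forestEnum_eq_kreweras]
      simp [forestEnum_empty]

end Trees

theorem treeInvEnum_eq_pfCosumEnum_general {A : Type*} [CommSemiring A] (q : A) (n : ℕ) :
    ∑ᶠ T : {G : SimpleGraph (Fin (n + 1)) // G.IsTree}, q ^ treeInv T.val =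
      ∑ᶠ π ∈ {π : Fin n → ℕ | IsPF n π}, q ^ cosum n π := by
  rw [finsum_treeInv_eq_kreweras, finsum_cosum_eq_kreweras]

/-- The tree inversion enumerator equals the parking function cosum
enumerator, as polynomials in `q`. -/
theorem treeInvEnum_eq_pfCosumEnum (n : ℕ) :
    (∑ᶠ T : {G : SimpleGraph (Fin (n+1)) // G.IsTree}, (X : Polynomial ℤ) ^ treeInv T.val)
      = ∑ᶠ π ∈ {π : Fin n → ℕ | IsPF n π}, (X : Polynomial ℤ) ^ cosum n π :=
  treeInvEnum_eq_pfCosumEnum_general X n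
end

section
/- For n ≥ 1, the number of trees on {0,1,...,n} rooted at 0 with exactly one leaf, counted with weight q^{inv(T)}, equals [n]_q! = [1]_q [2]_q ⋯ [n]_q. Equivalently, I_n(q,0) = [n]_q!. -/
open Finset Polynomial

/-- The number of leaves of a tree on `{0,...,n}` rooted at `0`: the non-root
vertices with exactly one neighbor. -/
noncomputable def treeLev {n : ℕ} (T : SimpleGraph (Fin (n+1))) : ℕ :=
  Set.ncard {v : Fin (n+1) | v ≠ 0 ∧ (T.neighborSet v).ncard = 1}

/-!
In a tree with a single leaf the root has degree one and every other vertex has degree at most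
two, by the handshake identity. Such a tree is therefore a path starting at the root `0`, and it
is determined by the permutation `d` of `{0,...,n}` that sends a vertex to its depth. As `j` lies
on the path from `i` to `0` exactly when `d j ≤ d i`, the inversions of the tree are those of
`d`. Since `d 0 = 0`, deleting the first letter of `d` leaves an arbitrary permutation of `n`
letters with the same inversions, and inversions of permutations are enumerated by `[n]_q!`:
prepending the letter `p` creates `p` new inversions.
-/

section Permutations

/-- The number of inversions of a permutation `σ`: pairs `a < b` with `σ b < σ a`. -/
def permInv {α : Type*} [Fintype α] [LinearOrder α] (σ : Equiv.Perm α) : ℕ :=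
  #{p : α × α | p.1 < p.2 ∧ σ p.2 < σ p.1}

theorem permInv_eq_sum {α : Type*} [Fintype α] [LinearOrder α] (σ : Equiv.Perm α) :
    permInv σ = ∑ a, #{b | a < b ∧ σ b < σ a} := by
  simp only [permInv, card_filter, Fintype.sum_prod_type]

variable {m : ℕ}

/-- The permutation of `Fin (m + 1)` whose one-line notation is `p` followed by that of `σ`, the
letters of `σ` being relabelled increasingly by the complement of `p`. -/
def consPerm (p : Fin (m + 1)) (σ : Equiv.Perm (Fin m)) : Equiv.Perm (Fin (m + 1)) :=
  (finSuccEquiv m).trans ((Equiv.optionCongr σ).trans (finSuccEquiv' p).symm)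

@[simp]
theorem consPerm_zero (p : Fin (m + 1)) (σ : Equiv.Perm (Fin m)) : consPerm p σ 0 = p := by
  simp [consPerm]

@[simp]
theorem consPerm_succ (p : Fin (m + 1)) (σ : Equiv.Perm (Fin m)) (i : Fin m) :
    consPerm p σ i.succ = p.succAbove (σ i) := by
  simp [consPerm]

theorem consPerm_injective2 : Function.Injective2 (consPerm (m := m)) := by
  intro p p' σ σ' h
  obtain rfl : p = p' := by simpa using DFunLike.congr_fun h 0
  exact ⟨rfl, Equiv.ext fun i => by simpa using DFunLike.congr_fun h i.succ⟩

theorem consPerm_bijective : Function.Bijective (Function.uncurry (consPerm (m := m))) := by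
  rw [Fintype.bijective_iff_injective_and_card]
  exact ⟨consPerm_injective2.uncurry, by simp [Fintype.card_perm, Nat.factorial_succ]⟩

theorem exists_consPerm_zero_eq_iff {d : Equiv.Perm (Fin (m + 1))} :
    (∃ σ, consPerm 0 σ = d) ↔ d 0 = 0 := by
  refine ⟨fun ⟨σ, hσ⟩ => hσ ▸ consPerm_zero 0 σ, fun hd => ?_⟩
  obtain ⟨⟨p, σ⟩, rfl⟩ := consPerm_bijective.surjective d
  obtain rfl : p = 0 := by simpa using hd
  exact ⟨σ, rfl⟩

theorem card_filter_succAbove_lt (p : Fin (m + 1)) : #{k : Fin m | p.succAbove k < p} = p := by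
  have lt_iff (k : Fin m) : p.succAbove k < p ↔ (k : ℕ) < p := by
    rw [Fin.succAbove_lt_iff_castSucc_lt, Fin.lt_def, Fin.val_castSucc]
  rw [filter_congr fun k _ => lt_iff k, Fin.card_filter_val_lt, min_eq_right (by lia)]

theorem permInv_consPerm (p : Fin (m + 1)) (σ : Equiv.Perm (Fin m)) :
    permInv (consPerm p σ) = p + permInv σ := by
  have inversions_at_zero : #{b | 0 < b ∧ consPerm p σ b < consPerm p σ 0} = p := by
    rw [Fin.card_filter_univ_succ]
    simp only [consPerm_zero, consPerm_succ, Fin.succ_pos, lt_irrefl, true_and, false_and,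
      if_false]
    rw [← card_filter_succAbove_lt p]
    exact card_equiv σ (by simp)
  have inversions_at_succ (i : Fin m) :
      #{b | i.succ < b ∧ consPerm p σ b < consPerm p σ i.succ} = #{b | i < b ∧ σ b < σ i} := by
    rw [Fin.card_filter_univ_succ]
    simp [(Fin.strictMono_succAbove p).lt_iff_lt]
  simp only [permInv_eq_sum, Fin.sum_univ_succ, inversions_at_zero, inversions_at_succ]

theorem sum_pow_permInv {R : Type*} [CommSemiring R] (q : R) (m : ℕ) :
    ∑ σ : Equiv.Perm (Fin m), q ^ permInv σ = ∏ k ∈ Icc 1 m, ∑ j ∈ range k, q ^ j := by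
  induction m with
  | zero => simp [permInv]
  | succ m ih =>
    calc ∑ τ : Equiv.Perm (Fin (m + 1)), q ^ permInv τ
        = ∑ p : Fin (m + 1), ∑ σ : Equiv.Perm (Fin m), q ^ permInv (consPerm p σ) := by
          rw [← consPerm_bijective.sum_comp, Fintype.sum_prod_type]; rfl
      _ = (∑ p : Fin (m + 1), q ^ (p : ℕ)) * ∑ σ : Equiv.Perm (Fin m), q ^ permInv σ := by
          simp only [permInv_consPerm, pow_add, sum_mul_sum]
      _ = ∏ k ∈ Icc 1 (m + 1), ∑ j ∈ range k, q ^ j := by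
          rw [ih, Fin.sum_univ_eq_sum_range (q ^ ·), prod_Icc_succ_top (by lia), mul_comm]

end Permutations

section Graphs

open SimpleGraph

variable {V : Type*} {G : SimpleGraph V}

theorem exists_mem_support_eq_of_le {f : V → ℕ} (hf : ∀ ⦃u v⦄, G.Adj u v → f u ≤ f v + 1) {u v : V}
    (p : G.Walk u v) {k : ℕ} (hv : f v ≤ k) (hu : k ≤ f u) : ∃ w ∈ p.support, f w = k := by
  induction p with
  | nil => exact ⟨_, by simp, hv.antisymm hu⟩
  | @cons u u' v h p ih =>
    rcases hu.eq_or_lt with rfl | hlt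
    · exact ⟨u, by simp, rfl⟩
    · obtain ⟨w, hw, rfl⟩ := ih hv (by have := hf h; lia)
      exact ⟨w, by simp [hw], rfl⟩

-- The largest vertex of a cycle would cover both of its neighbours on the cycle.
theorem hasse_isAcyclic (α : Type*) [LinearOrder α] : (hasse α).IsAcyclic := by
  classical
  intro v c hc
  obtain ⟨w, hw, hmax⟩ := c.support.toFinset.exists_max_image id
    ⟨v, List.mem_toFinset.2 c.start_mem_support⟩
  simp only [List.mem_toFinset, id] at hw hmax
  have covBy_of_adj {x : α} (hx : x ∈ (c.rotate w hw).support) (h : (hasse α).Adj w x) : x ⋖ w :=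
    h.resolve_left fun hwx => (hmax x (by simpa using hx)).not_gt hwx.lt
  have hc' : (c.rotate w hw).IsCycle := by simpa using hc
  refine hc'.snd_ne_penultimate (CovBy.unique_left (covBy_of_adj ?_ ?_) (covBy_of_adj ?_ ?_))
  · exact Walk.getVert_mem_support _ _
  · exact Walk.adj_snd hc'.not_nil
  · exact Walk.getVert_mem_support _ _
  · exact (Walk.adj_penultimate hc'.not_nil).symm

theorem pathGraph_isTree (n : ℕ) : (pathGraph (n + 1)).IsTree :=
  ⟨pathGraph_connected n, hasse_isAcyclic _⟩

theorem ncard_neighborSet_pathGraph_eq_one_iff {n : ℕ} {i : Fin (n + 2)} :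
    ((pathGraph (n + 2)).neighborSet i).ncard = 1 ↔ i = 0 ∨ i = Fin.last (n + 1) := by
  rw [Set.ncard_eq_one]
  constructor
  · rintro ⟨w, hw⟩
    by_contra! h
    simp only [ne_eq, Fin.ext_iff, Fin.val_zero, Fin.val_last] at h
    have pred_mem : (⟨i - 1, by lia⟩ : Fin (n + 2)) ∈ (pathGraph (n + 2)).neighborSet i := by
      simp only [mem_neighborSet, pathGraph_adj]; lia
    have succ_mem : (⟨i + 1, by lia⟩ : Fin (n + 2)) ∈ (pathGraph (n + 2)).neighborSet i := by
      simp [mem_neighborSet, pathGraph_adj]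
    rw [hw, Set.mem_singleton_iff, Fin.ext_iff] at pred_mem succ_mem
    lia
  · rintro (rfl | rfl)
    · refine ⟨1, Set.ext fun j => ?_⟩
      simp only [mem_neighborSet, pathGraph_adj, Set.mem_singleton_iff, Fin.ext_iff, Fin.val_zero,
        Fin.val_one]
      lia
    · refine ⟨⟨n, by lia⟩, Set.ext fun j => ?_⟩
      simp only [mem_neighborSet, pathGraph_adj, Set.mem_singleton_iff, Fin.ext_iff, Fin.val_last]
      lia

theorem degree_eq_one_and_forall_degree_le_two [Fintype V] [DecidableRel G.Adj] (hG : G.IsTree)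
    {r l : V} (hrl : r ≠ l) (h : ∀ v, G.degree v = 1 → v = r ∨ v = l) :
    G.degree r = 1 ∧ ∀ v, G.degree v ≤ 2 := by
  classical
  have : Nontrivial V := ⟨r, l, hrl⟩
  let e (v : V) : ℕ := (if v = r then 1 else 0) + if v = l then 1 else 0
  have two_le (v : V) : 2 ≤ G.degree v + e v := by
    have hpos : 0 < G.degree v := hG.connected.preconnected.degree_pos_of_nontrivial v
    grind
  have hsum : ∑ _v : V, 2 = ∑ v, (G.degree v + e v) := by
    have := hG.card_edgeFinset
    simp only [sum_const, card_univ, smul_eq_mul, sum_add_distrib, e,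
      sum_degrees_eq_twice_card_edges, sum_ite_eq', mem_univ, if_true]
    lia
  have degree_add (v : V) : 2 = G.degree v + e v :=
    (sum_eq_sum_iff_of_le fun v _ => two_le v).1 hsum v (mem_univ v)
  exact ⟨by grind, fun v => by grind⟩

theorem exists_adj_dist_add_one_eq {r v : V} (hv : G.dist r v ≠ 0) :
    ∃ w, G.Adj w v ∧ G.dist r w + 1 = G.dist r v := by
  rw [dist_comm] at hv
  obtain ⟨p, hp⟩ := exists_walk_of_dist_ne_zero hv
  cases p with
  | nil => simp at hv
  | @cons _ w _ h p =>
    have dist_le_length : G.dist r w ≤ p.length := dist_comm (G := G) ▸ dist_le p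
    have diff_dist := h.symm.diff_dist_adj (u := r)
    rw [Walk.length_cons, dist_comm] at hp
    rw [dist_comm] at hv
    exact ⟨w, h.symm, by lia⟩

theorem dist_injective_of_children_unique (hG : G.Connected) {r : V}
    (h : ∀ ⦃w u v⦄, G.Adj w u → G.Adj w v →
      G.dist r w + 1 = G.dist r u → G.dist r w + 1 = G.dist r v → u = v) :
    Function.Injective (G.dist r) := by
  have eq_of_dist_eq (k : ℕ) : ∀ u v, G.dist r u = k → G.dist r v = k → u = v := by
    induction k with
    | zero =>
      intro u v hu hv
      rw [← hG.dist_eq_zero_iff.1 hu, hG.dist_eq_zero_iff.1 hv]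
    | succ k ih =>
      intro u v hu hv
      obtain ⟨w, hwu, hw⟩ := exists_adj_dist_add_one_eq (G := G) (r := r) (v := u) (by lia)
      obtain ⟨w', hwv, hw'⟩ := exists_adj_dist_add_one_eq (G := G) (r := r) (v := v) (by lia)
      obtain rfl := ih w w' (by lia) (by lia)
      exact h hwu hwv hw hw'
  exact fun u v huv => eq_of_dist_eq _ u v rfl huv.symm

theorem dist_injective_of_degree_le (hG : G.Connected) [G.LocallyFinite] {r : V}
    (hr : G.degree r ≤ 1) (hdeg : ∀ v, G.degree v ≤ 2) : Function.Injective (G.dist r) := by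
  classical
  refine dist_injective_of_children_unique hG fun w u v hwu hwv hu hv => ?_
  by_contra huv
  by_cases hw : w = r
  · subst hw
    have : #{u, v} ≤ G.degree w := card_le_card (by simp [insert_subset_iff, hwu, hwv])
    grind
  · obtain ⟨z, hzw, hz⟩ := exists_adj_dist_add_one_eq (hG.pos_dist_of_ne (Ne.symm hw)).ne'
    have : #{u, v, z} ≤ G.degree w :=
      card_le_card (by simp [insert_subset_iff, hwu, hwv, hzw.symm])
    grind

theorem adj_iff_of_dist_injective {r : V} (hinj : Function.Injective (G.dist r)) {u v : V} :
    G.Adj u v ↔ G.dist r u + 1 = G.dist r v ∨ G.dist r v + 1 = G.dist r u := by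
  have adj_of_dist {u v : V} (h : G.dist r u + 1 = G.dist r v) : G.Adj u v := by
    obtain ⟨w, hwv, hw⟩ := exists_adj_dist_add_one_eq (G := G) (r := r) (v := v) (by lia)
    obtain rfl : w = u := hinj (by lia)
    exact hwv
  refine ⟨fun h => ?_, fun h => h.elim adj_of_dist fun h => (adj_of_dist h).symm⟩
  have := h.diff_dist_adj (u := r)
  have := hinj.ne h.ne
  lia

theorem exists_iso_pathGraph_of_dist_injective [Fintype V] {r : V}
    (hinj : Function.Injective (G.dist r)) {n : ℕ} (hV : Fintype.card V = n) :
    ∃ e : G ≃g pathGraph n, ∀ v, (e v : ℕ) = G.dist r v := by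
  have dist_lt (v : V) : G.dist r v < n := by
    have hreach : G.Reachable r v := by
      by_contra h
      obtain rfl : r = v := hinj (by rw [dist_self, dist_eq_zero_of_not_reachable h])
      exact h (.refl r)
    obtain ⟨p, hp, hlen⟩ := hreach.exists_path_of_dist
    exact hlen ▸ hV ▸ hp.length_lt
  let f (v : V) : Fin n := ⟨G.dist r v, dist_lt v⟩
  have hf : Function.Bijective f :=
    (Fintype.bijective_iff_injective_and_card f).2
      ⟨fun u v h => hinj (Fin.mk.inj h), by simp [hV]⟩
  exact ⟨⟨Equiv.ofBijective f hf,
    by simp [pathGraph_adj, adj_iff_of_dist_injective hinj, f]⟩, fun v => rfl⟩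

end Graphs

section PathTrees

open SimpleGraph

variable {n : ℕ}

/-- The path on `{0, ..., n}` in which `v` is the vertex at depth `d v`, that is, the path
`d⁻¹ 0 — d⁻¹ 1 — ⋯ — d⁻¹ n`. -/
def pathTree (d : Equiv.Perm (Fin (n + 1))) : SimpleGraph (Fin (n + 1)) :=
  (pathGraph (n + 1)).comap d

theorem pathTree_adj {d : Equiv.Perm (Fin (n + 1))} {u v : Fin (n + 1)} :
    (pathTree d).Adj u v ↔ (d u : ℕ) + 1 = d v ∨ (d v : ℕ) + 1 = d u :=
  pathGraph_adj

theorem pathTree_isTree (d : Equiv.Perm (Fin (n + 1))) : (pathTree d).IsTree :=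
  (Iso.comap d (pathGraph (n + 1))).isTree_iff.2 (pathGraph_isTree n)

theorem mem_support_pathTree_of_le {d : Equiv.Perm (Fin (n + 1))} {u v j : Fin (n + 1)}
    (p : (pathTree d).Walk u v) (hv : d v ≤ d j) (hu : d j ≤ d u) : j ∈ p.support := by
  obtain ⟨w, hw, hwj⟩ := exists_mem_support_eq_of_le (f := fun v => (d v : ℕ))
    (fun u v h => by have := pathTree_adj.1 h; lia) p hv hu
  exact d.injective (Fin.ext hwj) ▸ hw

theorem onPath_pathTree_iff {d : Equiv.Perm (Fin (n + 1))} (hd : d 0 = 0) {i j : Fin (n + 1)} :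
    OnPath (pathTree d) i j ↔ d j ≤ d i := by
  have d_zero_le (k : Fin (n + 1)) : d 0 ≤ d k := by rw [hd]; exact Fin.zero_le _
  refine ⟨fun h => ?_, fun h p _ => mem_support_pathTree_of_le p (d_zero_le j) h⟩
  -- If `j` were deeper than `i`, the path would have to revisit `i` on its way from `j` to `0`.
  by_contra! hlt
  obtain ⟨p, hp⟩ := ((pathTree_isTree d).existsUnique_path i 0).exists
  have hj := h p hp
  cases p with
  | nil => simp_all
  | cons _ p =>
    rw [Walk.cons_isPath_iff] at hp
    have hjp : j ∈ p.support := by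
      rw [Walk.support_cons, List.mem_cons] at hj
      exact hj.resolve_left (by rintro rfl; exact hlt.false)
    have hi : i ∈ (p.dropUntil j hjp).support :=
      mem_support_pathTree_of_le _ (d_zero_le i) hlt.le
    exact hp.2 (p.support_dropUntil_subset_support hjp hi)

theorem treeInv_pathTree {d : Equiv.Perm (Fin (n + 1))} (hd : d 0 = 0) :
    treeInv (pathTree d) = permInv d := by
  refine Nat.subtype_card _ fun ⟨i, j⟩ => ?_
  have depth_lt_iff (hij : i < j) : d j < d i ↔ d j ≤ d i :=
    (d.injective.ne hij.ne').le_iff_lt.symm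
  have pos_of_depth_lt (h : d j < d i) : 0 < (i : ℕ) := by
    rw [Fin.val_pos_iff, Fin.pos_iff_ne_zero]
    rintro rfl
    simp [hd] at h
  simp only [mem_filter, mem_univ, true_and, onPath_pathTree_iff hd]
  grind

theorem pathTree_injOn : Set.InjOn (pathTree (n := n)) {d | d 0 = 0} := by
  intro d hd e he h
  have depth_le_iff (i j : Fin (n + 1)) : d j ≤ d i ↔ e j ≤ e i := by
    rw [← onPath_pathTree_iff hd, ← onPath_pathTree_iff he, h]
  let f : Fin (n + 1) ≃o Fin (n + 1) := ⟨d.symm.trans e, by simp [← depth_le_iff]⟩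
  have hf : f = OrderIso.refl _ := Subsingleton.elim _ _
  ext i
  simpa [f] using congrArg Fin.val (DFunLike.congr_fun hf (d i)).symm

theorem treeLev_pathTree (hn : 1 ≤ n) {d : Equiv.Perm (Fin (n + 1))} (hd : d 0 = 0) :
    treeLev (pathTree d) = 1 := by
  obtain ⟨n, rfl⟩ := Nat.exists_eq_add_of_le' hn
  have ncard_neighborSet (v : Fin (n + 2)) :
      ((pathTree d).neighborSet v).ncard = ((pathGraph (n + 2)).neighborSet (d v)).ncard :=
    Set.ncard_preimage_of_injective_subset_range (s := (pathGraph (n + 2)).neighborSet (d v))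
      d.injective (by simp)
  have leaf_iff (v : Fin (n + 2)) :
      v ≠ 0 ∧ ((pathTree d).neighborSet v).ncard = 1 ↔ v = d.symm (Fin.last (n + 1)) := by
    rw [ncard_neighborSet, ncard_neighborSet_pathGraph_eq_one_iff, Equiv.eq_symm_apply,
      ← d.injective.ne_iff, hd]
    grind [Fin.last_pos]
  simp only [treeLev, leaf_iff, Set.ofPred_eq_eq_singleton, Set.ncard_singleton]

theorem exists_pathTree_eq {T : SimpleGraph (Fin (n + 1))} (hT : T.IsTree)
    (hlev : treeLev T = 1) : ∃ d : Equiv.Perm (Fin (n + 1)), d 0 = 0 ∧ pathTree d = T := by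
  classical
  obtain ⟨l, hl⟩ := Set.ncard_eq_one.1 hlev
  have leaf_iff (v : Fin (n + 1)) : v ≠ 0 ∧ T.degree v = 1 ↔ v = l := by
    rw [← Set.mem_singleton_iff (a := v), ← hl, ← card_neighborSet_eq_degree,
      ← Nat.card_eq_fintype_card]
    rfl
  obtain ⟨hroot, hdeg⟩ := degree_eq_one_and_forall_degree_le_two hT (r := 0) (l := l)
    ((leaf_iff l).2 rfl).1.symm fun v hv => or_iff_not_imp_left.2 fun h => (leaf_iff v).1 ⟨h, hv⟩
  obtain ⟨e, he⟩ := exists_iso_pathGraph_of_dist_injective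
    (dist_injective_of_degree_le hT.connected hroot.le hdeg) (Fintype.card_fin (n + 1))
  exact ⟨e.toEquiv, Fin.ext (by simp [he]), by ext u v; exact e.map_adj_iff⟩

theorem isTree_and_treeLev_eq_one_iff (hn : 1 ≤ n) {T : SimpleGraph (Fin (n + 1))} :
    T.IsTree ∧ treeLev T = 1 ↔ ∃ σ, pathTree (consPerm 0 σ) = T := by
  constructor
  · rintro ⟨hT, hlev⟩
    obtain ⟨d, hd, rfl⟩ := exists_pathTree_eq hT hlev
    obtain ⟨σ, rfl⟩ := exists_consPerm_zero_eq_iff.2 hd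
    exact ⟨σ, rfl⟩
  · rintro ⟨σ, rfl⟩
    exact ⟨pathTree_isTree _, treeLev_pathTree hn (consPerm_zero 0 σ)⟩

end PathTrees

theorem treeInvEnum_one_leaf_general {R : Type*} [CommSemiring R] (q : R) (n : ℕ) (hn : 1 ≤ n) :
    ∑ᶠ T ∈ {G : SimpleGraph (Fin (n + 1)) | G.IsTree ∧ treeLev G = 1}, q ^ treeInv T
      = ∏ k ∈ Icc 1 n, ∑ j ∈ range k, q ^ j := by
  have eq_range : {G : SimpleGraph (Fin (n + 1)) | G.IsTree ∧ treeLev G = 1}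
      = Set.range fun σ => pathTree (consPerm 0 σ) :=
    Set.ext fun _ => isTree_and_treeLev_eq_one_iff hn
  have hinj : Function.Injective fun σ : Equiv.Perm (Fin n) => pathTree (consPerm 0 σ) :=
    fun σ τ h => consPerm_injective2.right 0
      (pathTree_injOn (consPerm_zero 0 σ) (consPerm_zero 0 τ) h)
  calc ∑ᶠ T ∈ {G : SimpleGraph (Fin (n + 1)) | G.IsTree ∧ treeLev G = 1}, q ^ treeInv T
      = ∑ σ : Equiv.Perm (Fin n), q ^ treeInv (pathTree (consPerm 0 σ)) := by
        rw [eq_range, finsum_mem_range hinj, finsum_eq_sum_of_fintype]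
    _ = ∑ σ : Equiv.Perm (Fin n), q ^ permInv σ := by
        simp [treeInv_pathTree, permInv_consPerm]
    _ = ∏ k ∈ Icc 1 n, ∑ j ∈ range k, q ^ j := sum_pow_permInv q n

/-- `I_n(q,0) = [n]_q!`: for `n ≥ 1`, the `q^{inv}`-weighted count of trees on
`{0,...,n}` rooted at `0` with exactly one leaf equals `[1]_q [2]_q ⋯ [n]_q`. -/
theorem treeInvEnum_one_leaf (n : ℕ) (hn : 1 ≤ n) :
    (∑ᶠ T ∈ {G : SimpleGraph (Fin (n+1)) | G.IsTree ∧ treeLev G = 1},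
        (X : Polynomial ℤ) ^ treeInv T)
      = ∏ k ∈ Finset.Icc 1 n, ∑ j ∈ Finset.range k, (X : Polynomial ℤ) ^ j :=
  treeInvEnum_one_leaf_general X n hn
end

section
/- For n ≥ 1, the generating function of increasing trees on {0,1,...,n} (trees with no inversions) by number of leaves satisfies Σ_{T increasing} t^{lev(T)−1} = A_n(t), the n-th Eulerian polynomial. Equivalently, I_n(0,t) = A_n(t). -/
open Finset Polynomial

/-- The number of descents of a permutation `σ ∈ S_n`: indices `i` with
`σ i > σ (i+1)` (0-indexed consecutive pairs). -/
def desNum {n : ℕ} (σ : Equiv.Perm (Fin n)) : ℕ :=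
  ((Finset.univ : Finset (Fin n × Fin n)).filter
    fun p => p.1.val + 1 = p.2.val ∧ σ p.2 < σ p.1).card

/-!
Both sides are built by insertion. A permutation of `n` letters is extended by inserting the new
maximum at one of `n + 1` positions, and an increasing tree on `{0,...,n}` by attaching the vertex
`n + 1` to one of the `n + 1` existing vertices. The new maximum ends an ascending run and destroys
the run end it is placed just after, if any; the new vertex is a leaf and destroys the leaf it is
attached to, if any. So run ends and leaves are counted by the same recursion, and a nonempty
permutation has one more run end than it has descents.
-/

section Insertion

variable {M : Type*} [AddCommMonoid M] {n : ℕ}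

/-- The Eulerian recurrence, acting on weights: the total weight of the `n + 1` extensions of an
object of size `n` with `k` marked elements, when `k` of them have `k` marked elements and the
others have `k + 1`. -/
def eulerianStep (n : ℕ) (w : ℕ → M) (k : ℕ) : M :=
  k • w k + (n + 1 - k) • w (k + 1)

theorem card_filter_succ_ne_add_one (S : Finset (Fin n)) (p : Fin (n + 1)) :
    #{i ∈ S | i.succ ≠ p} + 1 = if p ∈ S.map (Fin.succEmb n) then #S else #S + 1 := by
  split_ifs with hp
  · obtain ⟨i, hi, rfl⟩ := mem_map.1 hp
    simp [filter_ne', card_erase_add_one hi]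
  · rw [filter_true_of_mem]
    rintro i hi rfl
    exact hp (mem_map_of_mem _ hi)

theorem sum_card_filter_succ_ne (S : Finset (Fin n)) (w : ℕ → M) :
    ∑ p : Fin (n + 1), w (#{i ∈ S | i.succ ≠ p} + 1) = eulerianStep n w #S := by
  simp only [card_filter_succ_ne_add_one, apply_ite w, sum_ite, sum_const, filter_mem_eq_inter,
    univ_inter, card_map, filter_notMem_eq_sdiff, card_sdiff_of_subset (subset_univ _),
    card_univ, Fintype.card_fin, eulerianStep]

end Insertion

section RunEnds

variable {n : ℕ}

/-- The positions at which the ascending runs of the word `σ 0, σ 1, …` end: those not followed by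
a larger letter, the last position included. -/
def runEnds (σ : Equiv.Perm (Fin n)) : Finset (Fin n) :=
  {i | ∀ j : Fin n, i.val + 1 = j.val → σ j < σ i}

theorem mem_runEnds {σ : Equiv.Perm (Fin n)} {i : Fin n} :
    i ∈ runEnds σ ↔ ∀ j : Fin n, i.val + 1 = j.val → σ j < σ i := by
  simp [runEnds]

theorem last_mem_runEnds (σ : Equiv.Perm (Fin (n + 1))) : Fin.last n ∈ runEnds σ :=
  mem_runEnds.2 fun j hj => absurd j.isLt (by simp [← hj])

theorem castSucc_mem_runEnds {σ : Equiv.Perm (Fin (n + 1))} {i : Fin n} :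
    i.castSucc ∈ runEnds σ ↔ σ i.succ < σ i.castSucc := by
  rw [mem_runEnds]
  refine ⟨fun h => h i.succ (by simp), fun h j hj => ?_⟩
  rwa [show j = i.succ from Fin.ext (by simp [← hj])]

theorem desNum_eq_card_filter (σ : Equiv.Perm (Fin (n + 1))) :
    desNum σ = #{i : Fin n | σ i.succ < σ i.castSucc} := by
  symm
  refine card_nbij (fun i => (i.castSucc, i.succ)) (by simp [Set.MapsTo])
    (fun i _ j _ hij => Fin.succ_injective n (Prod.ext_iff.1 hij).2) ?_
  rintro ⟨a, b⟩ hab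
  obtain ⟨hval, hdes⟩ : a.val + 1 = b.val ∧ σ b < σ a := by simpa using hab
  obtain ⟨i, rfl⟩ : ∃ i : Fin n, i.castSucc = a := ⟨⟨a, by omega⟩, rfl⟩
  obtain rfl : i.succ = b := Fin.ext hval
  exact ⟨i, by simpa using hdes, rfl⟩

theorem card_runEnds (σ : Equiv.Perm (Fin (n + 1))) : #(runEnds σ) = desNum σ + 1 := by
  have hruns : runEnds σ =
      insert (Fin.last n) (Finset.map Fin.castSuccEmb {i | σ i.succ < σ i.castSucc}) := by
    ext x
    induction x using Fin.lastCases with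
    | last => simp [last_mem_runEnds]
    | cast i => simp [castSucc_mem_runEnds]
  rw [hruns, card_insert_of_notMem (by simp), card_map, desNum_eq_card_filter]

end RunEnds

section InsertMax

variable {n : ℕ}

/-- The permutation whose word is that of `σ` with the new largest letter inserted at position
`p`. -/
def insertMax (p : Fin (n + 1)) (σ : Equiv.Perm (Fin n)) : Equiv.Perm (Fin (n + 1)) :=
  (finSuccEquiv' p).trans (σ.optionCongr.trans (finSuccEquiv' (Fin.last n)).symm)

@[simp]
theorem insertMax_self (p : Fin (n + 1)) (σ : Equiv.Perm (Fin n)) :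
    insertMax p σ p = Fin.last n := by
  simp [insertMax]

@[simp]
theorem insertMax_succAbove (p : Fin (n + 1)) (σ : Equiv.Perm (Fin n)) (i : Fin n) :
    insertMax p σ (p.succAbove i) = (σ i).castSucc := by
  simp [insertMax]

theorem insertMax_bijective :
    Function.Bijective fun x : Fin (n + 1) × Equiv.Perm (Fin n) => insertMax x.1 x.2 := by
  rw [Fintype.bijective_iff_injective_and_card]
  refine ⟨?_, by simp [Fintype.card_perm, Nat.factorial_succ]⟩
  rintro ⟨p, σ⟩ ⟨q, τ⟩ (h : insertMax p σ = insertMax q τ)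
  obtain rfl : p = q := (insertMax q τ).injective (by rw [insertMax_self, ← h, insertMax_self])
  have hστ : σ = τ := Equiv.ext fun i => Fin.castSucc_injective n <| by
    rw [← insertMax_succAbove p, h, insertMax_succAbove]
  rw [hστ]

theorem self_mem_runEnds_insertMax (p : Fin (n + 1)) (σ : Equiv.Perm (Fin n)) :
    p ∈ runEnds (insertMax p σ) := by
  refine mem_runEnds.2 fun j hj => ?_
  have hjp : j ≠ p := by rintro rfl; omega
  rw [insertMax_self, Fin.lt_last_iff_ne_last, ← insertMax_self p σ]
  exact (insertMax p σ).injective.ne hjp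

theorem succAbove_mem_runEnds_insertMax {p : Fin (n + 1)} {σ : Equiv.Perm (Fin n)} {i : Fin n} :
    p.succAbove i ∈ runEnds (insertMax p σ) ↔ i ∈ runEnds σ ∧ i.succ ≠ p := by
  have hval (k : Fin n) : (p.succAbove k).val = if k.val < p.val then k.val else k.val + 1 := by
    simp only [Fin.succAbove, Fin.lt_def, Fin.val_castSucc, apply_ite Fin.val, Fin.val_succ]
  have hbefore : (p.succAbove i).val + 1 = p.val ↔ i.succ = p := by
    rw [hval, Fin.ext_iff, Fin.val_succ]
    split_ifs <;> omega
  have hnext (hp : i.succ ≠ p) (k : Fin n) :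
      (p.succAbove i).val + 1 = (p.succAbove k).val ↔ i.val + 1 = k.val := by
    rw [ne_eq, Fin.ext_iff, Fin.val_succ] at hp
    rw [hval, hval]
    split_ifs <;> omega
  rw [mem_runEnds, mem_runEnds, Fin.forall_iff_succAbove p, and_comm, insertMax_self, hbefore]
  simp only [insertMax_succAbove, Fin.castSucc_lt_castSucc_iff, (Fin.le_last _).not_gt, imp_false]
  exact and_congr_left fun hp => forall_congr' fun k => by rw [hnext hp]

theorem runEnds_insertMax (p : Fin (n + 1)) (σ : Equiv.Perm (Fin n)) :
    runEnds (insertMax p σ) =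
      insert p (({i ∈ runEnds σ | i.succ ≠ p}).map p.succAboveEmb) := by
  ext x
  rcases Fin.eq_self_or_eq_succAbove p x with rfl | ⟨i, rfl⟩
  · simp [self_mem_runEnds_insertMax]
  · simp [succAbove_mem_runEnds_insertMax, Fin.succAbove_ne]

theorem sum_card_runEnds_succ {M : Type*} [AddCommMonoid M] (w : ℕ → M) :
    ∑ σ : Equiv.Perm (Fin (n + 1)), w #(runEnds σ) =
      ∑ σ : Equiv.Perm (Fin n), eulerianStep n w #(runEnds σ) := by
  rw [← insertMax_bijective.sum_comp, Fintype.sum_prod_type_right]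
  refine sum_congr rfl fun σ _ => ?_
  rw [← sum_card_filter_succ_ne]
  refine sum_congr rfl fun p _ => ?_
  rw [runEnds_insertMax, card_insert_of_notMem (by simp [Fin.succAbove_ne]), card_map]

end InsertMax

/-- Parent functions of increasing trees on `{0,...,n}`: `f i` is the parent of the vertex `i + 1`,
which is a vertex smaller than `i + 1`. -/
abbrev ParentFun (n : ℕ) : Type := (i : Fin n) → Fin (i.val + 1)

namespace ParentFun

variable {n : ℕ}

/-- The parent of the vertex `i.succ`, as a vertex. -/
def parent (f : ParentFun n) (i : Fin n) : Fin (n + 1) := (f i).castLE (by omega)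

theorem parent_lt_succ (f : ParentFun n) (i : Fin n) : f.parent i < i.succ := (f i).isLt

theorem parent_injective : Function.Injective (parent (n := n)) := fun _ _ h =>
  funext fun i => Fin.castLE_injective _ (congrFun h i)

/-- The childless vertices other than the root `0`; `i` stands for the vertex `i.succ`. -/
def leaves (f : ParentFun n) : Finset (Fin n) := {i | ∀ j, f.parent j ≠ i.succ}

theorem mem_leaves {f : ParentFun n} {i : Fin n} : i ∈ f.leaves ↔ ∀ j, f.parent j ≠ i.succ := by
  simp [leaves]

/-- Attach the new vertex `n + 1` to the vertex `p`. -/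
def attach (f : ParentFun n) (p : Fin (n + 1)) : ParentFun (n + 1) :=
  Fin.snoc (α := fun i : Fin (n + 1) => Fin (i.val + 1)) f p

@[simp]
theorem parent_attach_castSucc (f : ParentFun n) (p : Fin (n + 1)) (i : Fin n) :
    (f.attach p).parent i.castSucc = (f.parent i).castSucc := by
  simp [parent, attach]

@[simp]
theorem parent_attach_last (f : ParentFun n) (p : Fin (n + 1)) :
    (f.attach p).parent (Fin.last n) = p.castSucc := by
  simp [parent, attach, Fin.ext_iff]

theorem leaves_attach (f : ParentFun n) (p : Fin (n + 1)) :
    (f.attach p).leaves =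
      insert (Fin.last n) (({i ∈ f.leaves | i.succ ≠ p}).map Fin.castSuccEmb) := by
  ext x
  induction x using Fin.lastCases with
  | last =>
    have hchildless : Fin.last n ∈ (f.attach p).leaves := mem_leaves.2 fun j =>
      (((f.attach p).parent_lt_succ j).trans_le (Fin.succ_le_succ_iff.2 j.le_last)).ne
    simp [hchildless]
  | cast i =>
    simp [mem_leaves, Fin.forall_fin_succ', ← Fin.castSucc_succ, eq_comm]

theorem sum_card_leaves_succ {M : Type*} [AddCommMonoid M] (w : ℕ → M) :
    ∑ f : ParentFun (n + 1), w #f.leaves = ∑ f : ParentFun n, eulerianStep n w #f.leaves := by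
  have hattach : ∑ x : Fin (n + 1) × ParentFun n, w #(x.2.attach x.1).leaves =
      ∑ f : ParentFun (n + 1), w #f.leaves :=
    (Fin.snocEquiv fun i : Fin (n + 1) => Fin (i.val + 1)).sum_comp fun f => w #(leaves f)
  rw [← hattach, Fintype.sum_prod_type_right]
  refine sum_congr rfl fun f _ => ?_
  rw [← sum_card_filter_succ_ne]
  refine sum_congr rfl fun p _ => ?_
  rw [leaves_attach, card_insert_of_notMem (by simp), card_map]

theorem sum_card_leaves_eq_sum_card_runEnds {M : Type*} [AddCommMonoid M] (w : ℕ → M) :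
    ∑ f : ParentFun n, w #f.leaves = ∑ σ : Equiv.Perm (Fin n), w #(runEnds σ) := by
  induction n generalizing w with
  | zero => simp [eq_empty_of_isEmpty]
  | succ n ih => rw [sum_card_leaves_succ, ih, sum_card_runEnds_succ]

/-- The tree on `{0,...,n}` whose edges join each vertex other than `0` to its parent. -/
def toGraph (f : ParentFun n) : SimpleGraph (Fin (n + 1)) :=
  SimpleGraph.fromRel fun a b => ∃ i : Fin n, a = i.succ ∧ b = f.parent i

theorem toGraph_adj {f : ParentFun n} {a b : Fin (n + 1)} :
    f.toGraph.Adj a b ↔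
      ∃ i : Fin n, (a = i.succ ∧ b = f.parent i) ∨ (b = i.succ ∧ a = f.parent i) := by
  rw [toGraph, SimpleGraph.fromRel_adj, ← exists_or, and_iff_right_of_imp]
  rintro ⟨i, ⟨rfl, rfl⟩ | ⟨rfl, rfl⟩⟩
  exacts [(f.parent_lt_succ i).ne', (f.parent_lt_succ i).ne]

theorem toGraph_adj_parent (f : ParentFun n) (i : Fin n) : f.toGraph.Adj i.succ (f.parent i) :=
  toGraph_adj.2 ⟨i, Or.inl ⟨rfl, rfl⟩⟩

theorem eq_parent_of_toGraph_adj {f : ParentFun n} {i : Fin n} {b : Fin (n + 1)}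
    (hadj : f.toGraph.Adj i.succ b) (hlt : b < i.succ) : b = f.parent i := by
  obtain ⟨j, ⟨hi, rfl⟩ | ⟨rfl, hi⟩⟩ := toGraph_adj.1 hadj
  · rw [Fin.succ_injective n hi]
  · exact absurd (hi ▸ f.parent_lt_succ j) hlt.not_gt

theorem toGraph_injective : Function.Injective (toGraph (n := n)) := fun f _ h =>
  parent_injective <| funext fun i =>
    eq_parent_of_toGraph_adj (h ▸ f.toGraph_adj_parent i) (f.parent_lt_succ i)

theorem edgeSet_toGraph (f : ParentFun n) :
    f.toGraph.edgeSet = Set.range fun i : Fin n => s(i.succ, f.parent i) := by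
  ext e
  induction e using Sym2.ind with
  | _ a b => simp [toGraph_adj, eq_comm, and_comm]

theorem exists_walk_zero_forall_le (f : ParentFun n) (a : Fin (n + 1)) :
    ∃ p : f.toGraph.Walk a 0, ∀ b ∈ p.support, b ≤ a := by
  induction a using WellFoundedLT.induction with
  | _ a ih =>
    cases a using Fin.cases with
    | zero => exact ⟨.nil, by simp⟩
    | succ i =>
      obtain ⟨p, hp⟩ := ih _ (f.parent_lt_succ i)
      refine ⟨.cons (f.toGraph_adj_parent i) p, fun b hb => ?_⟩
      rcases List.mem_cons.1 hb with rfl | hb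
      · exact le_rfl
      · exact (hp b hb).trans (f.parent_lt_succ i).le

theorem toGraph_connected (f : ParentFun n) : f.toGraph.Connected := by
  refine SimpleGraph.connected_iff_exists_forall_reachable _ |>.2 ⟨0, fun a => ?_⟩
  obtain ⟨p, -⟩ := f.exists_walk_zero_forall_le a
  exact p.reachable.symm

theorem toGraph_isTree (f : ParentFun n) : f.toGraph.IsTree := by
  refine SimpleGraph.isTree_iff_connected_and_card.2 ⟨f.toGraph_connected, ?_⟩
  have hge := f.toGraph_connected.card_vert_le_card_edgeSet_add_one
  have hle : Nat.card f.toGraph.edgeSet ≤ n := by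
    rw [edgeSet_toGraph]
    simpa using Finite.card_range_le fun i : Fin n => s(i.succ, f.parent i)
  rw [Nat.card_fin] at hge ⊢
  omega

end ParentFun

section Inversions

variable {n : ℕ} {T : SimpleGraph (Fin (n + 1))}

theorem treeInv_eq_zero_iff : treeInv T = 0 ↔ ∀ i j, i ≠ 0 → OnPath T i j → j ≤ i := by
  rw [treeInv, Finite.card_eq_zero_iff, isEmpty_subtype, Prod.forall]
  refine forall₂_congr fun i j => ?_
  rw [← Fin.val_ne_zero_iff, ← Nat.pos_iff_ne_zero, ← not_lt]
  tauto

theorem onPath_of_mem_support (hT : T.IsAcyclic) {i j : Fin (n + 1)} {p : T.Walk i 0}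
    (hp : p.IsPath) (hj : j ∈ p.support) : OnPath T i j := fun q hq => by
  have hpq : p = q :=
    congrArg Subtype.val ((hT.subsingleton_path i 0).elim ⟨p, hp⟩ ⟨q, hq⟩)
  rwa [← hpq]

theorem exists_adj_lt_of_treeInv_eq_zero (hT : T.IsTree) (hinv : treeInv T = 0)
    {v : Fin (n + 1)} (hv : v ≠ 0) : ∃ b < v, T.Adj v b := by
  obtain ⟨p, hp⟩ := hT.connected.exists_isPath v 0
  have hadj : T.Adj v p.snd := p.adj_snd fun hnil => hv hnil.eq
  have hsnd : OnPath T v p.snd := onPath_of_mem_support hT.isAcyclic hp (p.getVert_mem_support 1)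
  exact ⟨p.snd, (treeInv_eq_zero_iff.1 hinv v _ hv hsnd).lt_of_ne hadj.ne', hadj⟩

end Inversions

namespace ParentFun

variable {n : ℕ}

theorem treeInv_toGraph (f : ParentFun n) : treeInv f.toGraph = 0 := by
  refine treeInv_eq_zero_iff.2 fun i j _ hij => ?_
  obtain ⟨p, hp⟩ := f.exists_walk_zero_forall_le i
  exact hp j (p.support_bypass_subset_support (hij p.bypass p.bypass_isPath))

theorem exists_toGraph_eq {T : SimpleGraph (Fin (n + 1))} (hT : T.IsTree)
    (hinv : treeInv T = 0) : ∃ f : ParentFun n, f.toGraph = T := by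
  choose b hlt hadj using fun i : Fin n =>
    exists_adj_lt_of_treeInv_eq_zero hT hinv (Fin.succ_ne_zero i)
  let f : ParentFun n := fun i => ⟨b i, hlt i⟩
  have hle : f.toGraph ≤ T := by
    intro u v huv
    obtain ⟨i, ⟨rfl, rfl⟩ | ⟨rfl, rfl⟩⟩ := toGraph_adj.1 huv
    exacts [hadj i, (hadj i).symm]
  exact ⟨f, hle.antisymm
    ((SimpleGraph.isTree_iff_minimal_connected.1 hT).2 f.toGraph_connected hle)⟩

theorem range_toGraph :
    Set.range (toGraph (n := n)) = {G | G.IsTree ∧ treeInv G = 0} := by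
  refine Set.Subset.antisymm ?_ fun T hT => exists_toGraph_eq hT.1 hT.2
  rintro _ ⟨f, rfl⟩
  exact ⟨f.toGraph_isTree, f.treeInv_toGraph⟩

theorem neighborSet_toGraph_succ (f : ParentFun n) (i : Fin n) :
    f.toGraph.neighborSet i.succ = insert (f.parent i) (Fin.succ '' {j | f.parent j = i.succ}) := by
  ext b
  simp [toGraph_adj, exists_or, and_comm, eq_comm]

theorem ncard_neighborSet_toGraph_succ (f : ParentFun n) (i : Fin n) :
    (f.toGraph.neighborSet i.succ).ncard = {j | f.parent j = i.succ}.ncard + 1 := by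
  have hparent : f.parent i ∉ Fin.succ '' {j | f.parent j = i.succ} := by
    rintro ⟨j, hj, hji⟩
    exact (hj ▸ f.parent_lt_succ j).not_gt (hji ▸ f.parent_lt_succ i)
  rw [neighborSet_toGraph_succ, Set.ncard_insert_of_notMem hparent,
    Set.ncard_image_of_injective _ (Fin.succ_injective n)]

theorem treeLev_toGraph (f : ParentFun n) : treeLev f.toGraph = #f.leaves := by
  have hleaves : {v | v ≠ 0 ∧ (f.toGraph.neighborSet v).ncard = 1} =
      (f.leaves.map (Fin.succEmb n) : Set (Fin (n + 1))) := by
    ext v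
    cases v using Fin.cases with
    | zero => simp
    | succ i =>
      rw [Set.mem_ofPred_eq, ncard_neighborSet_toGraph_succ, Nat.add_eq_right, Set.ncard_eq_zero,
        Set.eq_empty_iff_forall_notMem]
      simp [mem_leaves]
  rw [treeLev, hleaves, Set.ncard_coe_finset, card_map]

end ParentFun

/-- `I_n(0,t) = A_n(t)`: for `n ≥ 1`, the generating function of increasing
trees on `{0,...,n}` (trees with no inversions) by number of leaves (minus one)
is the `n`-th Eulerian polynomial. -/
theorem increasing_trees_eulerian (n : ℕ) (hn : 1 ≤ n) :
    (∑ᶠ T ∈ {G : SimpleGraph (Fin (n+1)) | G.IsTree ∧ treeInv G = 0},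
        (X : Polynomial ℤ) ^ (treeLev T - 1))
      = ∑ σ : Equiv.Perm (Fin n), (X : Polynomial ℤ) ^ desNum σ := by
  have hdes (σ : Equiv.Perm (Fin n)) : #(runEnds σ) - 1 = desNum σ := by
    obtain ⟨m, rfl⟩ := Nat.exists_eq_add_of_le' hn
    rw [card_runEnds, Nat.add_sub_cancel]
  calc
    _ = ∑ f : ParentFun n, (X : Polynomial ℤ) ^ (#f.leaves - 1) := by
      rw [← ParentFun.range_toGraph, finsum_mem_range ParentFun.toGraph_injective,
        finsum_eq_sum_of_fintype]
      simp only [ParentFun.treeLev_toGraph]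
    _ = ∑ σ : Equiv.Perm (Fin n), (X : Polynomial ℤ) ^ (#(runEnds σ) - 1) :=
      ParentFun.sum_card_leaves_eq_sum_card_runEnds fun k => X ^ (k - 1)
    _ = ∑ σ : Equiv.Perm (Fin n), (X : Polynomial ℤ) ^ desNum σ := by
      simp only [hdes]
end
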